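/- Let G_n be either the random symmetric matrix M_n with α-balanced entries or the reduced Laplacian L_n of an Erdős–Rényi graph. There exist constants c > 0 and K > 0 such that for every n and every prime p with p ≤ exp(n^c), P(rank(G_n/p) ≤ n − 2) ≤ K (p^{−3} + exp(−n^c)). -/

import Mathlib

/-!
The corank of a random symmetric matrix (or Laplacian) over `ZMod p` is controlled through its
kernel. For a tuple `F` of `d` vectors in `(ZMod p) ^ N`, expanding the indicator of `M F = 0` in
additive characters gives `P (M F = 0) ≤ SS F / p ^ (d N)` (`Corank.prob_le`), where `SS F` sums,
over all frequencies `C`, a Gaussian-like weight in the coefficients with which the entries of `M`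
occur in the pairing of `C` with `M F`. A kernel vector of the reduced Laplacian on `n + 1`
vertices is extended by zero and treated as a kernel vector of the full Laplacian, whose coefficient
matrix has the same shape up to a parameter `σ ∈ {0, 1}`.

The index set is cut into blocks. A vector `v` is bad if on some block a nonzero multiple `c v` is
close to a constant vector. If `T` is the set of such `c` on a block `D`, then `SS v` is at most
about `p ^ #D (#T + 1) ^ (N - #D)` (`Corank.SS_sc_le`). In the other direction most coordinates of
`v` on `D` lie in a set of size at most `1 + p / (32 #T)`, by Parseval and iterated
Cauchy–Davenport (`Corank.card_X`), and random sampling describes such a set by few parameters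
(`Corank.exists_code`). Balancing the two estimates on two scales of blocks, the union bound over
all bad vectors is exponentially small (`Corank.sum_bad`).

A kernel of dimension at least two without bad vectors contains at least `p ^ 4 / 4` linearly
independent pairs `F`, each spread out on every block. For such `F` the frequencies that matter are
the affine ones `C = A F + h` (`Corank.sum_nonaff`): smallness of the coefficients forces the map
from `F j` to `C j` to be additive, because subset sums of the `F j` fill the whole space. Moreover
`A` must be skew-symmetric, and `h = 0` for symmetric matrices (`Corank.HH_aff_ge`). There are `p`
such frequencies in the symmetric case and `p ^ 3` in the Laplacian case, where the vanishing last
coordinate leaves `p ^ (2 n)` pairs out of `p ^ (2 n + 2)`. In both cases the expected number of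
spread-out pairs in the kernel is `O (p)`, and Markov's inequality gives `O (p / p ^ 4) = O (p⁻³)`
(`Corank.corank_core`).

An α-balanced law has two distinct atoms `a`, `b` of positive mass, so the characteristic-function
bound holds for every prime not dividing `b - a`; the finitely many remaining primes and small `n`
are absorbed into the constant `K`.
-/

open MeasureTheory Filter

noncomputable section

def IsBalanced (α : ℝ) (μ : Measure ℤ) : Prop :=
  ∀ p : ℕ, p.Prime → ∀ r : ZMod p, μ {x : ℤ | (x : ZMod p) = r} ≤ ENNReal.ofReal (1 - α)

def symMatrix (n : ℕ) (x : Fin n × Fin n → ℤ) : Matrix (Fin n) (Fin n) ℤ :=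
  Matrix.of fun i j => if i ≤ j then x (i, j) else x (j, i)

def edgeInd {n : ℕ} (x : Fin n × Fin n → Bool) (i j : Fin n) : ℤ :=
  if i < j then (if x (i, j) then 1 else 0)
  else if j < i then (if x (j, i) then 1 else 0) else 0

def redLap (n : ℕ) (x : Fin (n + 1) × Fin (n + 1) → Bool) : Matrix (Fin n) (Fin n) ℤ :=
  Matrix.of fun i j =>
    if i = j then -(∑ k : Fin (n + 1), edgeInd x k i.castSucc)
    else edgeInd x i.castSucc j.castSucc

def matMeasure (μ : Measure ℤ) (hμ : IsProbabilityMeasure μ) (n : ℕ) :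
    Measure (Fin n × Fin n → ℤ) :=
  haveI := hμ
  Measure.pi fun _ => μ

def graphMeasure (n : ℕ) : Measure (Fin (n + 1) × Fin (n + 1) → Bool) :=
  (PMF.uniformOfFintype (Fin (n + 1) × Fin (n + 1) → Bool)).toMeasure

namespace Corank

open Finset

/-! ### The distance to zero in `ZMod p` -/

section Eta

variable {p : ℕ} [Fact p.Prime]

/-- The additive character `t ↦ exp (2 π i t / p)` of `ZMod p`. -/
abbrev ee (t : ZMod p) : ℂ := ZMod.stdAddChar t

/-- Half the chord `|1 - exp (2 π i t / p)|`, i.e. `|sin (π t / p)|`; a seminorm on the group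
`ZMod p` with values in `[0, 1]`. -/
def nrm (t : ZMod p) : ℝ := ‖1 - ee t‖ / 2

/-- The square `sin² (π t / p)` of `nrm`. -/
def eta (t : ZMod p) : ℝ := nrm t ^ 2

lemma ee_norm (t : ZMod p) : ‖ee t‖ = 1 := AddChar.norm_apply _ _

lemma ee_add (a b : ZMod p) : ee (a + b) = ee a * ee b := AddChar.map_add_eq_mul _ _ _

lemma ee_zero : ee (0 : ZMod p) = 1 := AddChar.map_zero_eq_one _

lemma ee_neg (a : ZMod p) : ee (-a) = (starRingEnd ℂ) (ee a) := by
  have h : ee (-a) * ee a = 1 := by rw [← ee_add]; simp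
  have h2 : (starRingEnd ℂ) (ee a) * ee a = 1 := by
    rw [mul_comm, Complex.mul_conj, Complex.normSq_eq_norm_sq, ee_norm]; simp
  have h3 : ee a ≠ 0 := by
    intro h0; have := ee_norm a; rw [h0] at this; simp at this
  exact mul_right_cancel₀ h3 (h.trans h2.symm)

lemma ee_sum {ι : Type*} (s : Finset ι) (f : ι → ZMod p) :
    ee (∑ i ∈ s, f i) = ∏ i ∈ s, ee (f i) := by
  classical
  induction s using Finset.induction_on with
  | empty => simp
  | insert a s ha ih => rw [sum_insert ha, prod_insert ha, ee_add, ih]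

lemma nrm_nonneg (t : ZMod p) : 0 ≤ nrm t := by unfold nrm; positivity

lemma nrm_zero : nrm (0 : ZMod p) = 0 := by simp [nrm]

lemma nrm_add (a b : ZMod p) : nrm (a + b) ≤ nrm a + nrm b := by
  unfold nrm
  have : 1 - ee (a + b) = (1 - ee a) + ee a * (1 - ee b) := by rw [ee_add]; ring
  rw [this]
  have h := norm_add_le (1 - ee a) (ee a * (1 - ee b))
  rw [norm_mul, ee_norm, one_mul] at h
  linarith

lemma nrm_sum {ι : Type*} (s : Finset ι) (f : ι → ZMod p) :
    nrm (∑ i ∈ s, f i) ≤ ∑ i ∈ s, nrm (f i) := by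
  classical
  induction s using Finset.induction_on with
  | empty => simp [nrm_zero]
  | insert a s ha ih =>
    rw [sum_insert ha, sum_insert ha]
    exact (nrm_add _ _).trans (by linarith)

lemma nrm_neg (a : ZMod p) : nrm (-a) = nrm a := by
  unfold nrm
  rw [ee_neg]
  have : 1 - (starRingEnd ℂ) (ee a) = (starRingEnd ℂ) (1 - ee a) := by simp
  rw [this, Complex.norm_conj]

lemma eta_nonneg (t : ZMod p) : 0 ≤ eta t := by unfold eta; positivity

lemma eta_zero : eta (0 : ZMod p) = 0 := by simp [eta, nrm_zero]

lemma eta_neg (a : ZMod p) : eta (-a) = eta a := by simp [eta, nrm_neg]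

lemma eta_eq (t : ZMod p) : eta t = (1 - (ee t).re) / 2 := by
  have h1 : Complex.normSq (ee t) = 1 := by
    rw [Complex.normSq_eq_norm_sq, ee_norm]; simp
  rw [Complex.normSq_apply] at h1
  unfold eta nrm
  rw [div_pow, ← Complex.normSq_eq_norm_sq, Complex.normSq_apply]
  simp only [Complex.sub_re, Complex.one_re, Complex.sub_im, Complex.one_im]
  nlinarith

lemma eta_le_one (t : ZMod p) : eta t ≤ 1 := by
  have h : nrm t ≤ 1 := by
    unfold nrm
    have := norm_sub_le (1 : ℂ) (ee t)
    rw [ee_norm, norm_one] at this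
    linarith
  unfold eta
  exact pow_le_one₀ (nrm_nonneg t) h

lemma eta_add (a b : ZMod p) : eta (a + b) ≤ 2 * eta a + 2 * eta b := by
  have h := nrm_add a b
  have h0 := nrm_nonneg (a + b)
  unfold eta
  nlinarith [sq_nonneg (nrm a - nrm b)]

lemma eta_sub (a b : ZMod p) : eta (a - b) ≤ 2 * eta a + 2 * eta b := by
  have := eta_add a (-b)
  rwa [← sub_eq_add_neg, eta_neg] at this

lemma eta_sum {ι : Type*} (s : Finset ι) (f : ι → ZMod p) :
    eta (∑ i ∈ s, f i) ≤ (#s : ℝ) * ∑ i ∈ s, eta (f i) := by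
  unfold eta
  exact (pow_le_pow_left₀ (nrm_nonneg _) (nrm_sum s f) 2).trans sq_sum_le_card_mul_sum_sq

lemma norm_one_add_ee (t : ZMod p) : ‖1 + ee t‖ ≤ 2 * Real.sqrt (1 - eta t) := by
  have h1 : Complex.normSq (ee t) = 1 := by
    rw [Complex.normSq_eq_norm_sq, ee_norm]; simp
  rw [Complex.normSq_apply] at h1
  have h2 : ‖1 + ee t‖ ^ 2 = 4 * (1 - eta t) := by
    rw [eta_eq, ← Complex.normSq_eq_norm_sq, Complex.normSq_apply]
    simp only [Complex.add_re, Complex.one_re, Complex.add_im, Complex.one_im]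
    nlinarith
  apply le_of_sq_le_sq _ (by positivity)
  rw [h2, mul_pow, Real.sq_sqrt (by linarith [eta_le_one t])]
  norm_num

lemma norm_one_add_ee_exp (t : ZMod p) : ‖1 + ee t‖ ≤ 2 * Real.exp (-(1 / 2) * eta t) := by
  refine (norm_one_add_ee t).trans ?_
  gcongr
  rw [Real.sqrt_le_left (Real.exp_pos _).le, ← Real.exp_nat_mul]
  have := Real.add_one_le_exp (-eta t)
  calc 1 - eta t ≤ Real.exp (-eta t) := by linarith
    _ = _ := by congr 1; push_cast; ring

lemma sum_ee_mul (b : ZMod p) : ∑ x : ZMod p, ee (x * b) = if b = 0 then (p : ℂ) else 0 := by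
  have := AddChar.sum_mulShift (ψ := (ZMod.stdAddChar : AddChar (ZMod p) ℂ)) b
    (ZMod.isPrimitive_stdAddChar p)
  simp only [ee]
  rw [this, ZMod.card]
  split_ifs <;> simp

lemma sum_eta_mul {c : ZMod p} (hc : c ≠ 0) : ∑ x : ZMod p, eta (x * c) = p / 2 := by
  have h := congrArg Complex.re (sum_ee_mul c)
  rw [if_neg hc, Complex.re_sum] at h
  simp only [eta_eq, ← sum_div, sum_sub_distrib, h]
  simp [ZMod.card]

lemma sum_eta : ∑ x : ZMod p, eta x = p / 2 := by
  simpa using sum_eta_mul (p := p) (c := 1) one_ne_zero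

lemma exists_eta_ge : ∃ t : ZMod p, (1 / 2 : ℝ) ≤ eta t := by
  by_contra! h
  have h1 : ∑ x : ZMod p, eta x < ∑ x : ZMod p, (1 / 2 : ℝ) :=
    sum_lt_sum_of_nonempty univ_nonempty fun x _ => h x
  rw [sum_eta] at h1
  simp [ZMod.card] at h1
  linarith

/-- Orthogonality of characters on `(ZMod p)^ι`. -/
lemma sum_ee_dot {ι : Type*} [Fintype ι] [DecidableEq ι] (y : ι → ZMod p) :
    ∑ u : ι → ZMod p, ee (u ⬝ᵥ y) = if y = 0 then (p : ℂ) ^ Fintype.card ι else 0 := by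
  have h : ∀ u : ι → ZMod p, ee (u ⬝ᵥ y) = ∏ i, ee (u i * y i) := fun u => by
    rw [dotProduct, ee_sum]
  simp_rw [h]
  rw [← Fintype.prod_sum (fun i (x : ZMod p) => ee (x * y i))]
  simp_rw [sum_ee_mul]
  split_ifs with hy
  · simp [hy]
  · obtain ⟨i, hi⟩ := Function.ne_iff.mp hy
    simp only [Pi.zero_apply] at hi
    exact prod_eq_zero (mem_univ i) (by simp [hi])

end Eta

end Corank

namespace Corank

open Finset
open scoped Pointwise

/-! ### Level sets and their encoding -/

section Level

variable {p : ℕ} [Fact p.Prime]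

lemma parseval (T : Finset (ZMod p)) :
    ∑ x : ZMod p, ‖∑ c ∈ T, ee (c * x)‖ ^ 2 = p * #T := by
  have h : ∀ x : ZMod p, ((‖∑ c ∈ T, ee (c * x)‖ ^ 2 : ℝ) : ℂ)
      = ∑ c ∈ T, ∑ c' ∈ T, ee (x * (c - c')) := by
    intro x
    push_cast
    rw [← Complex.mul_conj', map_sum, sum_mul_sum]
    refine sum_congr rfl fun c _ => sum_congr rfl fun c' _ => ?_
    rw [← ee_neg, ← ee_add]
    congr 1; ring
  have h2 : ((∑ x : ZMod p, ‖∑ c ∈ T, ee (c * x)‖ ^ 2 : ℝ) : ℂ) = ((p * #T : ℝ) : ℂ) := by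
    rw [Complex.ofReal_sum]
    simp_rw [h]
    rw [sum_comm]
    simp_rw [sum_comm (s := univ) (t := T), sum_ee_mul, sub_eq_zero]
    simp [mul_comm]
  exact_mod_cast h2

/-- The set of `x` which almost all frequencies of `T` nearly annihilate has size `O (p / #T)`. -/
lemma card_Y (T : Finset (ZMod p)) (hT : T.Nonempty) (Y : Finset (ZMod p))
    (hY : ∀ x ∈ Y, ∑ c ∈ T, eta (c * x) ≤ (#T : ℝ) / 8) : (#Y : ℝ) * #T ≤ 2 * p := by
  have hT0 : (0 : ℝ) < #T := by exact_mod_cast hT.card_pos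
  have h1 : ∀ x ∈ Y, (9 / 16 : ℝ) * (#T : ℝ) ^ 2 ≤ ‖∑ c ∈ T, ee (c * x)‖ ^ 2 := by
    intro x hx
    have h := hY x hx
    have h2 : (3 / 4 : ℝ) * #T ≤ (∑ c ∈ T, ee (c * x)).re := by
      rw [Complex.re_sum]
      simp only [eta_eq, ← sum_div, sum_sub_distrib] at h
      simp at h ⊢
      linarith
    have h3 := h2.trans (Complex.re_le_norm _)
    nlinarith
  have h4 := sum_le_sum h1
  have h5 : ∑ x ∈ Y, ‖∑ c ∈ T, ee (c * x)‖ ^ 2 ≤ p * #T := by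
    rw [← parseval]
    exact sum_le_sum_of_subset_of_nonneg (subset_univ _) fun _ _ _ => by positivity
  rw [sum_const, nsmul_eq_mul] at h4
  have h6 := h4.trans h5
  have h7 : (#Y : ℝ) * (9 / 16) * #T ≤ p := by
    apply le_of_mul_le_mul_right _ hT0
    linarith
  have : (0 : ℝ) ≤ p := by positivity
  nlinarith

/-- Iterated Cauchy–Davenport: the level set `{x | avg_c eta (c x) ≤ ε}` grows under doubling
while `ε` is only multiplied by `4`. -/
lemma doubling (T : Finset (ZMod p)) (A : Finset (ZMod p)) (hA : A.Nonempty) (B : ℝ) (k : ℕ)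
    (h : ∀ x ∈ A, ∑ c ∈ T, eta (c * x) ≤ B) :
    ∃ A' : Finset (ZMod p), A'.Nonempty ∧ (∀ x ∈ A', ∑ c ∈ T, eta (c * x) ≤ 4 ^ k * B) ∧
      min p (2 ^ k * (#A - 1) + 1) ≤ #A' := by
  induction k with
  | zero => exact ⟨A, hA, by simpa using h, by
      have := hA.card_pos
      rw [pow_zero, one_mul, Nat.sub_add_cancel this]
      exact min_le_right _ _⟩
  | succ k ih =>
    obtain ⟨A', hne, h1, h2⟩ := ih
    refine ⟨A' + A', hne.add hne, ?_, ?_⟩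
    · intro x hx
      obtain ⟨y, hy, z, hz, rfl⟩ := mem_add.mp hx
      calc ∑ c ∈ T, eta (c * (y + z)) ≤ ∑ c ∈ T, (2 * eta (c * y) + 2 * eta (c * z)) := by
            refine sum_le_sum fun c _ => ?_
            rw [mul_add]; exact eta_add _ _
        _ = 2 * ∑ c ∈ T, eta (c * y) + 2 * ∑ c ∈ T, eta (c * z) := by
            rw [sum_add_distrib, mul_sum, mul_sum]
        _ ≤ _ := by rw [pow_succ]; linarith [h1 y hy, h1 z hz]
    · have h3 := ZMod.cauchy_davenport (Fact.out : p.Prime) hne hne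
      rw [pow_succ]
      have h4 : 2 ^ k * 2 * (#A - 1) = 2 * (2 ^ k * (#A - 1)) := by ring
      rw [h4]
      omega

/-- The constant `1 / (8 * 4 ^ 6)`; six doublings bring it up to `1 / 8`. -/
def th : ℝ := 1 / 32768

/-- A level set of the distance averaged over the frequencies `T`, with shifts `b`, has at most
`1 + p / (32 #T)` points: its difference set is enlarged by doubling until `card_Y` applies. -/
lemma card_X (T : Finset (ZMod p)) (hT : T.Nonempty) (h0 : (0 : ZMod p) ∉ T)
    (b : ZMod p → ZMod p) (X : Finset (ZMod p))
    (hX : ∀ x ∈ X, ∑ c ∈ T, eta (c * x - b c) ≤ th * #T) :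
    (#X : ℝ) ≤ 1 + p / (32 * #T) := by
  have hT0 : (0 : ℝ) < #T := by exact_mod_cast hT.card_pos
  have hp0 : (0 : ℝ) < p := by exact_mod_cast (Fact.out : p.Prime).pos
  rcases X.eq_empty_or_nonempty with rfl | hne
  · simp; positivity
  have hdiff : ∀ x ∈ X + (-X), ∑ c ∈ T, eta (c * x) ≤ 4 * (th * #T) := by
    intro x hx
    obtain ⟨y, hy, z, hz, rfl⟩ := mem_add.mp hx
    obtain ⟨w, hw, rfl⟩ := mem_neg.mp hz
    calc ∑ c ∈ T, eta (c * (y + -w))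
        ≤ ∑ c ∈ T, (2 * eta (c * y - b c) + 2 * eta (c * w - b c)) := by
          refine sum_le_sum fun c _ => ?_
          have := eta_sub (c * y - b c) (c * w - b c)
          rwa [show c * y - b c - (c * w - b c) = c * (y + -w) by ring] at this
      _ = 2 * ∑ c ∈ T, eta (c * y - b c) + 2 * ∑ c ∈ T, eta (c * w - b c) := by
          rw [sum_add_distrib, mul_sum, mul_sum]
      _ ≤ _ := by linarith [hX y hy, hX w hw]
  obtain ⟨A, hA, h1, h2⟩ := doubling T (X + (-X)) (hne.add hne.neg) _ 5 hdiff
  have h3 := ZMod.cauchy_davenport (Fact.out : p.Prime) hne hne.neg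
  rw [card_neg] at h3
  have h1' : ∀ x ∈ A, ∑ c ∈ T, eta (c * x) ≤ (#T : ℝ) / 8 := fun x hx => by
    have := h1 x hx
    unfold th at this
    linarith
  have hYp : #A < p := by
    have hle : #A ≤ p := by simpa [ZMod.card] using card_le_univ A
    rcases hle.lt_or_eq with h | h
    · exact h
    exfalso
    have hAu : A = univ := by rw [← card_eq_iff_eq_univ, h, ZMod.card]
    have h4 : ∑ x : ZMod p, ∑ c ∈ T, eta (c * x) ≤ ∑ x : ZMod p, (#T : ℝ) / 8 :=
      sum_le_sum fun x _ => h1' x (hAu ▸ mem_univ x)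
    rw [sum_comm] at h4
    have h5 : ∀ c ∈ T, ∑ x : ZMod p, eta (c * x) = p / 2 := fun c hc => by
      simp_rw [mul_comm c]
      exact sum_eta_mul (fun h => h0 (h ▸ hc))
    rw [sum_congr rfl h5] at h4
    simp [ZMod.card] at h4
    nlinarith [mul_pos hp0 hT0]
  have hX1 := hne.card_pos
  have h6 : 64 * (#X - 1) + 1 ≤ #A := by omega
  have h7 : (64 : ℝ) * (#X - 1) + 1 ≤ #A := by
    have : ((64 * (#X - 1) + 1 : ℕ) : ℝ) ≤ #A := by exact_mod_cast h6
    rw [Nat.cast_add, Nat.cast_mul, Nat.cast_sub hX1] at this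
    simpa using this
  have h8 := card_Y T hT A h1'
  have h9 : ((#X : ℝ) - 1) * (32 * #T) ≤ p := by nlinarith
  have : (#X : ℝ) - 1 ≤ p / (32 * #T) := by rwa [le_div_iff₀ (by positivity)]
  linarith

/-- Random sampling: `r` elements of `T` suffice to detect every `x` which is far from being
annihilated by `T` on average. -/
lemma sampling (T : Finset (ZMod p)) (hT : T.Nonempty) (b : ZMod p → ZMod p) (r : ℕ)
    (hr : (p : ℝ) * (1 - th / 2) ^ r < 1) :
    ∃ c : Fin r → ZMod p, (∀ l, c l ∈ T) ∧
      ∀ x, th * #T < ∑ c ∈ T, eta (c * x - b c) → ∃ l, th / 2 ≤ eta (c l * x - b (c l)) := by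
  classical
  have hT0 : (0 : ℝ) < #T := by exact_mod_cast hT.card_pos
  have hth : th / 2 < 1 := by unfold th; norm_num
  by_contra! hcon
  -- every tuple misses some far-away `x`; count pairs (tuple, missed `x`)
  set Z : Finset (ZMod p) := univ.filter fun x => th * #T < ∑ c ∈ T, eta (c * x - b c) with hZ
  set U : ZMod p → Finset (ZMod p) := fun x => T.filter fun c => eta (c * x - b c) < th / 2
  have hU : ∀ x ∈ Z, (#(U x) : ℝ) ≤ (1 - th / 2) * #T := by
    intro x hx
    have hx' : th * #T < ∑ c ∈ T, eta (c * x - b c) := (mem_filter.mp hx).2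
    rw [← sum_filter_add_sum_filter_not T (fun c => eta (c * x - b c) < th / 2)] at hx'
    have h1 : ∑ c ∈ T with eta (c * x - b c) < th / 2, eta (c * x - b c) ≤ #(U x) * (th / 2) := by
      rw [← nsmul_eq_mul]
      exact sum_le_card_nsmul _ _ _ fun c hc => (mem_filter.mp hc).2.le
    have h2 : ∑ c ∈ T with ¬ eta (c * x - b c) < th / 2, eta (c * x - b c)
        ≤ #(T.filter fun c => ¬ eta (c * x - b c) < th / 2) * 1 := by
      rw [← nsmul_eq_mul]
      exact sum_le_card_nsmul _ _ _ fun c hc => eta_le_one _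
    have h3 : (#(U x) : ℝ) + #(T.filter fun c => ¬ eta (c * x - b c) < th / 2) = #T := by
      exact_mod_cast card_filter_add_card_filter_not (s := T) fun c => eta (c * x - b c) < th / 2
    have hth0 : 0 < th := by unfold th; norm_num
    have h4 : (#(U x) : ℝ) ≤ #T := by exact_mod_cast card_filter_le _ _
    nlinarith
  have hsub : Fintype.piFinset (fun _ : Fin r => T) ⊆
      Z.biUnion fun x => Fintype.piFinset fun _ : Fin r => U x := by
    intro c hc
    rw [Fintype.mem_piFinset] at hc
    obtain ⟨x, hx, hl⟩ := hcon c hc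
    refine mem_biUnion.mpr ⟨x, mem_filter.mpr ⟨mem_univ _, hx⟩, ?_⟩
    rw [Fintype.mem_piFinset]
    exact fun l => mem_filter.mpr ⟨hc l, hl l⟩
  have h1 := (card_le_card hsub).trans card_biUnion_le
  simp only [Fintype.card_piFinset, prod_const, card_univ, Fintype.card_fin] at h1
  have h2 : (#T : ℝ) ^ r ≤ ∑ x ∈ Z, (#(U x) : ℝ) ^ r := by exact_mod_cast h1
  have h3 : ∑ x ∈ Z, (#(U x) : ℝ) ^ r ≤ ∑ x ∈ Z, ((1 - th / 2) * #T) ^ r :=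
    sum_le_sum fun x hx => pow_le_pow_left₀ (by positivity) (hU x hx) r
  rw [sum_const, nsmul_eq_mul, mul_pow] at h3
  have h4 : (#Z : ℝ) ≤ p := by
    have : #Z ≤ p := by simpa [ZMod.card] using card_le_univ Z
    exact_mod_cast this
  have h5 : 0 < (#T : ℝ) ^ r := by positivity
  have h6 : 0 ≤ (1 - th / 2) ^ r := pow_nonneg (by linarith) r
  have h7 : (#Z : ℝ) * (1 - th / 2) ^ r < 1 :=
    (mul_le_mul_of_nonneg_right h4 h6).trans_lt hr
  nlinarith

/-- A code: `r` pairs `(c, b)`, standing for the affine maps `x ↦ c x - b` on `ZMod p`. -/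
abbrev Code (p r : ℕ) := Fin r → ZMod p × ZMod p

/-- The points which all affine maps of the code `e` send close to zero. -/
def XS {r : ℕ} (e : Code p r) : Finset (ZMod p) :=
  univ.filter fun x => ∀ l, eta ((e l).1 * x - (e l).2) < th / 2

/-- The nonzero frequencies `c` for which `c v` is, on `D`, close to a constant vector. -/
def Tset {V : Type*} (s : ℝ) (D : Finset V) (v : V → ZMod p) : Finset (ZMod p) :=
  open Classical in univ.filter fun c => c ≠ 0 ∧ ∃ b, ∑ i ∈ D, eta (c * v i - b) ≤ s

/-- All but few coordinates of `v` on `D` lie in a set determined by a short code, and this set is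
the smaller the more frequencies bring `v` close to a constant on `D`. -/
lemma exists_code {V : Type*} (s : ℝ) (D : Finset V) (v : V → ZMod p)
    (hT : (Tset s D v).Nonempty) (r : ℕ) (hr : (p : ℝ) * (1 - th / 2) ^ r < 1) :
    ∃ e : Code p r, (#(XS e) : ℝ) ≤ 1 + p / (32 * #(Tset s D v)) ∧
      (#(D.filter fun i => v i ∉ XS e) : ℝ) * (th / 2) ≤ r * s := by
  classical
  set T := Tset s D v with hTdef
  have hmem : ∀ c ∈ T, c ≠ 0 ∧ ∃ b, ∑ i ∈ D, eta (c * v i - b) ≤ s := fun c hc => by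
    simpa [hTdef, Tset] using hc
  have hb : ∀ c : ZMod p, ∃ b, c ∈ T → ∑ i ∈ D, eta (c * v i - b) ≤ s := fun c => by
    by_cases hc : c ∈ T
    · obtain ⟨b, hb⟩ := (hmem c hc).2
      exact ⟨b, fun _ => hb⟩
    · exact ⟨0, fun h => absurd h hc⟩
  choose b hb using hb
  obtain ⟨c, hcT, hc⟩ := sampling T hT b r hr
  refine ⟨fun l => (c l, b (c l)), ?_, ?_⟩
  · refine card_X T hT (fun h => (hmem 0 h).1 rfl) b _ fun x hx => ?_
    by_contra! h
    obtain ⟨l, hl⟩ := hc x h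
    have := (mem_filter.mp hx).2 l
    simp only at this
    linarith
  · have h1 : ∀ i ∈ D.filter (fun i => v i ∉ XS fun l => (c l, b (c l))),
        th / 2 ≤ ∑ l, eta (c l * v i - b (c l)) := by
      intro i hi
      have hi2 := (mem_filter.mp hi).2
      simp only [XS, mem_filter, mem_univ, true_and, not_forall, not_lt] at hi2
      obtain ⟨l, hl⟩ := hi2
      exact hl.trans (single_le_sum (f := fun l => eta (c l * v i - b (c l)))
        (fun _ _ => eta_nonneg _) (mem_univ l))
    have h2 := card_nsmul_le_sum _ _ _ h1
    rw [nsmul_eq_mul] at h2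
    refine h2.trans ?_
    calc _ ≤ ∑ i ∈ D, ∑ l, eta (c l * v i - b (c l)) :=
          sum_le_sum_of_subset_of_nonneg (filter_subset _ _)
            fun _ _ _ => sum_nonneg fun _ _ => eta_nonneg _
      _ = ∑ l, ∑ i ∈ D, eta (c l * v i - b (c l)) := sum_comm
      _ ≤ ∑ l : Fin r, s := sum_le_sum fun l _ => hb _ (hcT l)
      _ = r * s := by simp

/-- Vectors with at most `Q` coordinates outside prescribed sets, counted through the generating
function with weight `1 / (N p)` per exceptional coordinate. -/
lemma count_vectors {N : ℕ} (hN : 0 < N) (X : Fin N → Finset (ZMod p)) (Q : ℕ) :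
    (#(univ.filter fun v : Fin N → ZMod p => #(univ.filter fun i => v i ∉ X i) ≤ Q) : ℝ)
      ≤ ((N : ℝ) * p) ^ Q * ∏ i, ((#(X i) : ℝ) + 1 / N) := by
  classical
  have hp : (1 : ℝ) ≤ p := by exact_mod_cast (Fact.out : p.Prime).one_le
  have hN' : (1 : ℝ) ≤ N := by exact_mod_cast hN
  have hNp : (1 : ℝ) ≤ N * p := by nlinarith
  have h1 : ∀ i, ∑ x : ZMod p, (if x ∈ X i then (1 : ℝ) else 1 / (N * p))
      ≤ (#(X i) : ℝ) + 1 / N := by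
    intro i
    rw [sum_ite]
    have : (#(univ.filter fun x => x ∉ X i) : ℝ) ≤ p := by
      have := card_le_univ (univ.filter fun x => x ∉ X i)
      rw [ZMod.card] at this
      exact_mod_cast this
    simp only [sum_const, nsmul_eq_mul, mul_one]
    have h2 : (#(univ.filter fun x => x ∉ X i) : ℝ) * (1 / (N * p)) ≤ p * (1 / (N * p)) := by
      gcongr
    have h3 : (p : ℝ) * (1 / (N * p)) = 1 / N := by field_simp
    simp only [filter_univ_mem]
    linarith
  have h2 : ∏ i, ∑ x : ZMod p, (if x ∈ X i then (1 : ℝ) else 1 / (N * p))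
      ≤ ∏ i, ((#(X i) : ℝ) + 1 / N) :=
    prod_le_prod (fun i _ => sum_nonneg fun x _ => by split_ifs <;> positivity) fun i _ => h1 i
  rw [Fintype.prod_sum] at h2
  refine le_trans ?_ (mul_le_mul_of_nonneg_left h2 (by positivity))
  rw [mul_sum, card_eq_sum_ones, Nat.cast_sum]
  refine (sum_le_sum (g := fun v : Fin N → ZMod p =>
    ((N : ℝ) * p) ^ Q * ∏ i, (if v i ∈ X i then (1 : ℝ) else 1 / (N * p))) fun v hv => ?_).trans
    (sum_le_sum_of_subset_of_nonneg (filter_subset _ _) fun v _ _ => ?_)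
  · have hv' := (mem_filter.mp hv).2
    rw [prod_ite, prod_const_one, one_mul, prod_const, one_div, inv_pow, ← div_eq_mul_inv,
      le_div_iff₀ (by positivity)]
    simp only [Nat.cast_one, one_mul]
    exact pow_le_pow_right₀ hNp hv'
  · refine mul_nonneg (by positivity) (prod_nonneg fun i _ => ?_)
    split_ifs <;> positivity

end Level

end Corank

namespace Corank

open Finset

/-! ### The Fourier sum attached to a tuple of vectors -/

section Fourier

variable {p : ℕ} [Fact p.Prime] {N d : ℕ}

/-- The coefficient of the entry `x i j` in `∑ i, C i ⬝ᵥ (row i of M F)`. Here `σ = 0` encodes a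
symmetric matrix with the given entries (diagonal left out), and `σ = 1` a Laplacian, whose rows
are `∑ j, x i j • (F j - F i)`. -/
def Bf (σ : ZMod p) (F C : Fin N → Fin d → ZMod p) (i j : Fin N) : ZMod p :=
  C i ⬝ᵥ (F j - σ • F i) + C j ⬝ᵥ (F i - σ • F j)

/-- Total size of the coefficients over all pairs `i < j`. -/
def HH (σ : ZMod p) (F C : Fin N → Fin d → ZMod p) : ℝ :=
  ∑ i, ∑ j, if i < j then eta (Bf σ F C i j) else 0

/-- The Fourier sum dominating `p ^ (d N)` times the probability that `M F = 0`. -/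
def SS (κ : ℝ) (σ : ZMod p) (F : Fin N → Fin d → ZMod p) : ℝ :=
  ∑ C, Real.exp (-κ * HH σ F C)

lemma Bf_symm (σ : ZMod p) (F C : Fin N → Fin d → ZMod p) (i j : Fin N) :
    Bf σ F C i j = Bf σ F C j i := by
  unfold Bf; rw [add_comm]

lemma HH_nonneg (σ : ZMod p) (F C : Fin N → Fin d → ZMod p) : 0 ≤ HH σ F C :=
  sum_nonneg fun i _ => sum_nonneg fun j _ => by
    split_ifs
    · exact eta_nonneg _
    · exact le_rfl

/-- Only the pairs across a cut `D | Dᶜ` are kept. -/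
lemma cross_le_HH (σ : ZMod p) (F C : Fin N → Fin d → ZMod p) (D : Finset (Fin N)) :
    ∑ j ∈ Dᶜ, ∑ i ∈ D, eta (Bf σ F C i j) ≤ HH σ F C := by
  classical
  set e : Fin N → Fin N → ℝ := fun i j => eta (Bf σ F C i j) with he
  have hsym : ∀ i j, e i j = e j i := fun i j => by simp only [he, Bf_symm σ F C i j]
  have hnn : ∀ i j, 0 ≤ e i j := fun i j => eta_nonneg _
  have h1 : ∑ j ∈ Dᶜ, ∑ i ∈ D, e i j
      = ∑ i, ∑ j, ((if i ∈ D ∧ j ∉ D ∧ i < j then e i j else 0)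
        + (if i ∈ D ∧ j ∉ D ∧ j < i then e i j else 0)) := by
    rw [sum_comm]
    rw [← sum_subset (subset_univ D)]
    · refine sum_congr rfl fun i hi => ?_
      rw [← sum_subset (subset_univ Dᶜ)]
      · refine sum_congr rfl fun j hj => ?_
        have hj' : j ∉ D := by simpa using hj
        rcases lt_trichotomy i j with h | h | h
        · simp [hi, hj', h, h.not_gt]
        · exact absurd (h ▸ hi) hj'
        · simp [hi, hj', h, h.not_gt]
      · intro j _ hj
        have hj' : j ∈ D := by simpa using hj
        simp [hj']
    · intro i _ hi
      simp [hi]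
  rw [h1]
  simp_rw [sum_add_distrib]
  rw [sum_comm (f := fun i j => if i ∈ D ∧ j ∉ D ∧ j < i then e i j else 0), ← sum_add_distrib]
  unfold HH
  refine sum_le_sum fun i _ => ?_
  rw [← sum_add_distrib]
  refine sum_le_sum fun j _ => ?_
  by_cases hij : i < j
  · by_cases hi : i ∈ D
    · have h0 := hnn i j
      by_cases hj : j ∈ D
      · simp [hi, hj, hij]; exact h0
      · simp [hi, hj, hij]; exact le_rfl
    · have h0 := hnn i j
      have h2 := hsym j i
      by_cases hj : j ∈ D
      · simp [hi, hj, hij]; exact h2.le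
      · simp [hi, hj, hij]; exact h0
  · simp [hij]

/-- The contribution of the vertex `j ∉ D` once the values `A` on `D` are fixed. -/
def Qf (κ : ℝ) (σ : ZMod p) (F : Fin N → Fin d → ZMod p) (D : Finset (Fin N))
    (A : Fin N → Fin d → ZMod p) (j : Fin N) : ℝ :=
  ∑ c : Fin d → ZMod p,
    Real.exp (-κ * ∑ i ∈ D, eta (A i ⬝ᵥ (F j - σ • F i) + c ⬝ᵥ (F i - σ • F j)))

/-- Exposing the values on `D` first, the sum over the remaining values factorises. -/
lemma sum_le_of_split (κ : ℝ) (hκ : 0 ≤ κ) (σ : ZMod p) (F : Fin N → Fin d → ZMod p)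
    (D : Finset (Fin N)) (G : (Fin N → Fin d → ZMod p) → Prop) [DecidablePred G]
    (hG : ∀ A A', (∀ i ∈ D, A i = A' i) → G A → G A') (Bd : ℝ) (hBd : 0 ≤ Bd)
    (h : ∀ A, G A → ∏ j ∈ Dᶜ, Qf κ σ F D A j ≤ Bd) :
    ∑ C with G C, Real.exp (-κ * HH σ F C) ≤ ((p : ℝ) ^ d) ^ #D * Bd := by
  classical
  let ext : ({i // i ∈ D} → Fin d → ZMod p) → Fin N → Fin d → ZMod p := fun a i =>
    if h : i ∈ D then a ⟨i, h⟩ else 0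
  let q : (Fin N → Fin d → ZMod p) → Fin N → (Fin d → ZMod p) → ℝ := fun A j c =>
    Real.exp (-κ * ∑ i ∈ D, eta (A i ⬝ᵥ (F j - σ • F i) + c ⬝ᵥ (F i - σ • F j)))
  have key : ∀ C : Fin N → Fin d → ZMod p, (if G C then Real.exp (-κ * HH σ F C) else 0) ≤
      (if G (ext fun i => C i) then (1 : ℝ) else 0) *
        ∏ j : {j // j ∉ D}, q (ext fun i => C i) j (C j) := by
    intro C
    have hext : ∀ i ∈ D, C i = ext (fun i => C i) i := fun i hi => by simp [ext, hi]
    by_cases hC : G C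
    · rw [if_pos hC, if_pos (hG _ _ hext hC), one_mul]
      have h1 : ∏ j : {j // j ∉ D}, q (ext fun i => C i) j (C j)
          = ∏ j ∈ Dᶜ, q (ext fun i => C i) j (C j) :=
        (prod_subtype (p := fun j => j ∉ D) Dᶜ (by simp)
          (fun j => q (ext fun i => C i) j (C j))).symm
      rw [h1]
      simp only [q]
      rw [← Real.exp_sum, ← mul_sum, Real.exp_le_exp]
      have h2 := cross_le_HH σ F C D
      have h3 : ∑ j ∈ Dᶜ, ∑ i ∈ D, eta (Bf σ F C i j) = ∑ j ∈ Dᶜ, ∑ i ∈ D,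
          eta (ext (fun i => C i) i ⬝ᵥ (F j - σ • F i) + C j ⬝ᵥ (F i - σ • F j)) :=
        sum_congr rfl fun j _ => sum_congr rfl fun i hi => by rw [← hext i hi]; rfl
      rw [h3] at h2
      rw [neg_mul, neg_mul, neg_le_neg_iff]
      exact mul_le_mul_of_nonneg_left h2 hκ
    · rw [if_neg hC]
      refine mul_nonneg (by split_ifs <;> norm_num) (prod_nonneg fun j _ => (Real.exp_pos _).le)
  rw [sum_filter]
  refine (sum_le_sum fun C _ => key C).trans ?_
  rw [← (Equiv.piEquivPiSubtypeProd (fun i => i ∈ D) (fun _ => Fin d → ZMod p)).symm.sum_comp]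
  rw [Fintype.sum_prod_type]
  have h4 : ∀ (a : {i // i ∈ D} → Fin d → ZMod p),
      (∑ b : {i // i ∉ D} → Fin d → ZMod p,
        (if G (ext fun i => (Equiv.piEquivPiSubtypeProd (fun i => i ∈ D) fun _ => Fin d → ZMod p).symm (a, b) i)
          then (1 : ℝ) else 0) * ∏ j : {j // j ∉ D},
          q (ext fun i => (Equiv.piEquivPiSubtypeProd (fun i => i ∈ D) fun _ => Fin d → ZMod p).symm (a, b) i) j
            ((Equiv.piEquivPiSubtypeProd (fun i => i ∈ D) fun _ => Fin d → ZMod p).symm (a, b) j)) ≤ Bd := by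
    intro a
    have h5 : ∀ b : {i // i ∉ D} → Fin d → ZMod p, (fun i : {i // i ∈ D} =>
        (Equiv.piEquivPiSubtypeProd (fun i => i ∈ D) fun _ => Fin d → ZMod p).symm (a, b) i) = a := by
      intro b; ext1 i; simp [i.2]
    have h6 : ∀ (b : {i // i ∉ D} → Fin d → ZMod p) (j : {j // j ∉ D}),
        (Equiv.piEquivPiSubtypeProd (fun i => i ∈ D) fun _ => Fin d → ZMod p).symm (a, b) j = b j := by
      intro b j; simp [j.2]
    simp_rw [h5, h6]
    rw [← mul_sum]
    by_cases hGa : G (ext a)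
    · rw [if_pos hGa, one_mul, ← Fintype.prod_sum (fun (j : {j // j ∉ D}) c => q (ext a) j c)]
      refine le_trans (le_of_eq ?_) (h (ext a) hGa)
      exact (prod_subtype (p := fun j => j ∉ D) Dᶜ (by simp)
        (fun j => Qf κ σ F D (ext a) j)).symm
    · rw [if_neg hGa, zero_mul]; exact hBd
  refine (sum_le_sum fun a _ => h4 a).trans (le_of_eq ?_)
  rw [sum_const, nsmul_eq_mul, card_univ]
  congr 1
  simp [ZMod.card]

/-- Frequencies `u` for which `u ⬝ᵥ F` is close to a constant on `D`. -/
def T0 (s : ℝ) (D : Finset (Fin N)) (F : Fin N → Fin d → ZMod p) : Finset (Fin d → ZMod p) :=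
  open Classical in univ.filter fun u => ∃ b, ∑ i ∈ D, eta (u ⬝ᵥ F i - b) ≤ s

/-- Two values `c` making the exponent small differ by an element of `T0`, so at most `#T0` values
contribute more than `exp (-κ s / 4)`. -/
lemma Qf_le (κ : ℝ) (hκ : 0 ≤ κ) (σ : ZMod p) (F : Fin N → Fin d → ZMod p) (D : Finset (Fin N))
    (A : Fin N → Fin d → ZMod p) (j : Fin N) (s m : ℝ)
    (hm : ∀ c : Fin d → ZMod p,
      m ≤ ∑ i ∈ D, eta (A i ⬝ᵥ (F j - σ • F i) + c ⬝ᵥ (F i - σ • F j))) :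
    Qf κ σ F D A j ≤ #(T0 s D F) * Real.exp (-κ * m) + (p : ℝ) ^ d * Real.exp (-κ * (s / 4)) := by
  classical
  set f : (Fin d → ZMod p) → ℝ := fun c =>
    ∑ i ∈ D, eta (A i ⬝ᵥ (F j - σ • F i) + c ⬝ᵥ (F i - σ • F j)) with hf
  set R : Finset (Fin d → ZMod p) := univ.filter fun c => f c < s / 4 with hR
  have hcard : #R ≤ #(T0 s D F) := by
    rcases R.eq_empty_or_nonempty with h0 | ⟨c0, hc0⟩
    · simp [h0]
    refine card_le_card_of_injOn (fun c => c - c0) ?_ (fun a _ b _ h => by simpa using h)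
    intro c hc
    have h1 : f c < s / 4 := (mem_filter.mp hc).2
    have h2 : f c0 < s / 4 := (mem_filter.mp hc0).2
    simp only [T0, coe_filter, mem_univ, true_and, Set.mem_ofPred_eq]
    refine ⟨σ * ((c - c0) ⬝ᵥ F j), ?_⟩
    calc ∑ i ∈ D, eta ((c - c0) ⬝ᵥ F i - σ * ((c - c0) ⬝ᵥ F j))
        ≤ ∑ i ∈ D, (2 * eta (A i ⬝ᵥ (F j - σ • F i) + c ⬝ᵥ (F i - σ • F j))
          + 2 * eta (A i ⬝ᵥ (F j - σ • F i) + c0 ⬝ᵥ (F i - σ • F j))) := by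
          refine sum_le_sum fun i _ => ?_
          refine le_of_eq_of_le ?_ (eta_sub _ _)
          congr 1
          simp only [sub_dotProduct, dotProduct_sub, dotProduct_smul, smul_eq_mul]
          ring
      _ = 2 * f c + 2 * f c0 := by rw [sum_add_distrib, ← mul_sum, ← mul_sum]
      _ ≤ s := by linarith
  have hQ : Qf κ σ F D A j = ∑ c, Real.exp (-κ * f c) := rfl
  rw [hQ, ← sum_filter_add_sum_filter_not univ (fun c => f c < s / 4)]
  refine add_le_add ?_ ?_
  · refine (sum_le_card_nsmul _ _ (Real.exp (-κ * m)) fun c _ => ?_).trans ?_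
    · rw [Real.exp_le_exp, neg_mul, neg_mul, neg_le_neg_iff]
      exact mul_le_mul_of_nonneg_left (hm c) hκ
    · rw [nsmul_eq_mul]
      gcongr
  · refine (sum_le_card_nsmul _ _ (Real.exp (-κ * (s / 4))) fun c hc => ?_).trans ?_
    · rw [Real.exp_le_exp, neg_mul, neg_mul, neg_le_neg_iff]
      exact mul_le_mul_of_nonneg_left (not_lt.mp (mem_filter.mp hc).2) hκ
    · rw [nsmul_eq_mul]
      gcongr
      have : #(univ.filter fun c => ¬ f c < s / 4) ≤ p ^ d := by
        refine (card_le_univ _).trans (le_of_eq ?_)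
        simp [ZMod.card]
      exact_mod_cast this

lemma Qf_nonneg (κ : ℝ) (σ : ZMod p) (F : Fin N → Fin d → ZMod p) (D : Finset (Fin N))
    (A : Fin N → Fin d → ZMod p) (j : Fin N) : 0 ≤ Qf κ σ F D A j :=
  sum_nonneg fun _ _ => (Real.exp_pos _).le

end Fourier

end Corank

namespace Corank

open Finset

/-! ### Kernel vectors that are nearly constant on a block -/

section Bad

variable {p : ℕ} [Fact p.Prime] {N : ℕ}

/-- A vector of scalars, seen as a tuple of one-dimensional vectors. -/
def sc (v : Fin N → ZMod p) : Fin N → Fin 1 → ZMod p := fun i _ => v i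

lemma card_T0_sc (s : ℝ) (D : Finset (Fin N)) (v : Fin N → ZMod p) :
    #(T0 s D (sc v)) ≤ #(Tset s D v) + 1 := by
  classical
  refine le_trans ?_ (card_insert_le 0 (Tset s D v))
  refine card_le_card_of_injOn (fun u => u 0) ?_ ?_
  · intro u hu
    simp only [T0, coe_filter, mem_univ, true_and, Set.mem_ofPred_eq] at hu
    obtain ⟨b, hb⟩ := hu
    by_cases h0 : u 0 = 0
    · simp [h0]
    · simp only [coe_insert, Set.mem_insert_iff, h0, false_or, Tset, coe_filter, mem_univ,
        true_and, Set.mem_ofPred_eq]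
      refine ⟨h0, b, ?_⟩
      simpa [dotProduct, sc] using hb
  · intro u _ w _ h
    funext i
    fin_cases i
    exact h

lemma prod_le_pow {ι : Type*} (s : Finset ι) (f : ι → ℝ) (b : ℝ) (h0 : ∀ i ∈ s, 0 ≤ f i)
    (h : ∀ i ∈ s, f i ≤ b) : ∏ i ∈ s, f i ≤ b ^ #s :=
  (prod_le_prod h0 h).trans_eq (prod_const b)

lemma SS_eq_filter {d : ℕ} (κ : ℝ) (σ : ZMod p) (F : Fin N → Fin d → ZMod p) :
    SS κ σ F = ∑ C with (fun _ => True) C, Real.exp (-κ * HH σ F C) := by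
  simp [SS]

/-- Exposing `D` first, each further coordinate contributes at most about `#(Tset s D v) + 1`. -/
lemma SS_sc_le (κ : ℝ) (hκ : 0 ≤ κ) (σ : ZMod p) (s : ℝ) (D : Finset (Fin N))
    (v : Fin N → ZMod p) :
    SS κ σ (sc v) ≤ (p : ℝ) ^ #D *
      (#(Tset s D v) + 1 + p * Real.exp (-κ * (s / 4))) ^ (N - #D) := by
  classical
  rw [SS_eq_filter]
  refine (sum_le_of_split κ hκ σ (sc v) D (fun _ => True) (fun _ _ _ _ => trivial)
    ((#(Tset s D v) + 1 + p * Real.exp (-κ * (s / 4))) ^ (N - #D))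
    (by positivity) (fun A _ => ?_)).trans_eq (by rw [pow_one])
  have hc : #Dᶜ = N - #D := by rw [card_compl, Fintype.card_fin]
  rw [← hc, ← prod_const]
  refine prod_le_prod (fun j _ => Qf_nonneg _ _ _ _ _ _) fun j _ => ?_
  refine (Qf_le κ hκ σ (sc v) D A j s 0 fun c => sum_nonneg fun _ _ => eta_nonneg _).trans ?_
  have := card_T0_sc s D v
  have h2 : (#(T0 s D (sc v)) : ℝ) ≤ #(Tset s D v) + 1 := by exact_mod_cast this
  simpa using h2

/-- The mean of `exp (-κ η)` over `ZMod p` is at most this constant, which is below one. -/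
def ze (κ : ℝ) : ℝ := 1 - (1 - Real.exp (-κ)) / 2

lemma ze_pos (κ : ℝ) : 0 < ze κ := by unfold ze; have := Real.exp_pos (-κ); linarith

lemma ze_le_one {κ : ℝ} (hκ : 0 ≤ κ) : ze κ ≤ 1 := by
  unfold ze
  have : Real.exp (-κ) ≤ 1 := Real.exp_le_one_iff.mpr (by linarith)
  linarith

lemma exp_eta_le (κ : ℝ) (t : ZMod p) :
    Real.exp (-κ * eta t) ≤ 1 - (1 - Real.exp (-κ)) * eta t := by
  have h := convexOn_exp.2 (Set.mem_univ (-κ)) (Set.mem_univ 0) (eta_nonneg t)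
    (sub_nonneg.mpr (eta_le_one t)) (by ring)
  simp only [smul_eq_mul, mul_zero, add_zero, Real.exp_zero, mul_one] at h
  rw [mul_comm] at h
  linarith

lemma sum_exp_eta_le (κ : ℝ) {c : ZMod p} (hc : c ≠ 0) (a : ZMod p) :
    ∑ x : ZMod p, Real.exp (-κ * eta (a + x * c)) ≤ p * ze κ := by
  have h1 : ∑ x : ZMod p, Real.exp (-κ * eta (a + x * c)) = ∑ x : ZMod p, Real.exp (-κ * eta x) := by
    have hb : Function.Bijective fun x : ZMod p => a + x * c := by
      refine (Finite.injective_iff_bijective).mp fun x y h => ?_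
      have : x * c = y * c := by simpa using h
      exact mul_right_cancel₀ hc this
    exact hb.sum_comp fun t => Real.exp (-κ * eta t)
  rw [h1]
  refine (sum_le_sum fun x _ => exp_eta_le κ x).trans (le_of_eq ?_)
  rw [sum_sub_distrib, ← mul_sum, sum_eta]
  simp [ze, ZMod.card]
  ring

/-- A cheap bound, valid as soon as no column of coefficients vanishes. -/
lemma SS_sc_le_ze (κ : ℝ) (hκ : 0 ≤ κ) (σ : ZMod p) (v : Fin N → ZMod p) (a b : Fin N)
    (hab : ∀ j, v a - σ * v j ≠ 0 ∨ v b - σ * v j ≠ 0) :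
    SS κ σ (sc v) ≤ (p : ℝ) ^ N * ze κ ^ (N - 2) := by
  classical
  set D : Finset (Fin N) := {a, b} with hD
  have hDc : #D ≤ 2 := card_le_two
  have hDN : #D ≤ N := (card_le_univ D).trans_eq (Fintype.card_fin N)
  rw [SS_eq_filter]
  have hz := ze_pos κ
  refine (sum_le_of_split κ hκ σ (sc v) D (fun _ => True) (fun _ _ _ _ => trivial)
    (((p : ℝ) * ze κ) ^ (N - #D)) (by positivity) (fun A _ => ?_)).trans ?_
  · have hc : #Dᶜ = N - #D := by rw [card_compl, Fintype.card_fin]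
    rw [← hc, ← prod_const]
    refine prod_le_prod (fun j _ => Qf_nonneg _ _ _ _ _ _) fun j _ => ?_
    obtain ⟨w, hw, hwj⟩ : ∃ w ∈ D, v w - σ * v j ≠ 0 := by
      rcases hab j with h | h
      · exact ⟨a, by simp [hD], h⟩
      · exact ⟨b, by simp [hD], h⟩
    set y := A w 0 * (v j - σ * v w) with hy
    refine le_trans ?_ (sum_exp_eta_le κ hwj y)
    unfold Qf
    rw [← (Equiv.funUnique (Fin 1) (ZMod p)).symm.sum_comp]
    refine sum_le_sum fun x _ => ?_
    rw [Real.exp_le_exp, neg_mul, neg_mul, neg_le_neg_iff]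
    refine mul_le_mul_of_nonneg_left ?_ hκ
    refine le_trans (le_of_eq ?_) (single_le_sum (f := fun i => eta (A i ⬝ᵥ (sc v j - σ • sc v i) +
      (Equiv.funUnique (Fin 1) (ZMod p)).symm x ⬝ᵥ (sc v i - σ • sc v j)))
      (fun i _ => eta_nonneg _) hw)
    simp [dotProduct, sc, hy]
  · rw [pow_one, mul_pow, ← mul_assoc, ← pow_add, Nat.add_sub_cancel' hDN]
    refine mul_le_mul_of_nonneg_left ?_ (by positivity)
    exact pow_le_pow_of_le_one hz.le (ze_le_one hκ) (by omega)

/-- Counting vectors whose entries mostly lie in sets prescribed by a code. -/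
lemma count_codes {K : Type*} [Fintype K] (hN : 0 < N) (good : K → Prop)
    (X : K → Fin N → Finset (ZMod p)) (Q : ℕ) (Bd : ℝ) (hBd : 0 ≤ Bd)
    (hX : ∀ e, good e → ∏ i, ((#(X e i) : ℝ) + 1 / N) ≤ Bd) (E : Finset (Fin N → ZMod p))
    (hE : ∀ v ∈ E, ∃ e, good e ∧ #(univ.filter fun i => v i ∉ X e i) ≤ Q) :
    (#E : ℝ) ≤ Fintype.card K * (((N : ℝ) * p) ^ Q * Bd) := by
  classical
  have h1 : E ⊆ (univ.filter good).biUnion fun e =>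
      univ.filter fun v : Fin N → ZMod p => #(univ.filter fun i => v i ∉ X e i) ≤ Q := by
    intro v hv
    obtain ⟨e, he, hq⟩ := hE v hv
    simp only [mem_biUnion, mem_filter, mem_univ, true_and]
    exact ⟨e, he, hq⟩
  have h2 : (#E : ℝ) ≤ ∑ e ∈ univ.filter good,
      (#(univ.filter fun v : Fin N → ZMod p => #(univ.filter fun i => v i ∉ X e i) ≤ Q) : ℝ) := by
    exact_mod_cast (card_le_card h1).trans card_biUnion_le
  refine h2.trans ?_
  refine (sum_le_card_nsmul _ _ (((N : ℝ) * p) ^ Q * Bd) fun e he => ?_).trans ?_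
  · refine (count_vectors hN (X e) Q).trans ?_
    exact mul_le_mul_of_nonneg_left (hX e (mem_filter.mp he).2) (by positivity)
  · rw [nsmul_eq_mul]
    refine mul_le_mul_of_nonneg_right ?_ (by positivity)
    exact_mod_cast card_le_univ _

lemma exists_code' {V : Type*} (s : ℝ) (D : Finset V) (v : V → ZMod p)
    (hT : (Tset s D v).Nonempty) (r q : ℕ) (hr : (p : ℝ) * (1 - th / 2) ^ r < 1)
    (hq : r * s ≤ q * (th / 2)) :
    ∃ e : Code p r, (#(XS e) : ℝ) ≤ 1 + p / (32 * #(Tset s D v)) ∧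
      #(D.filter fun i => v i ∉ XS e) ≤ q := by
  obtain ⟨e, he, he2⟩ := exists_code s D v hT r hr
  refine ⟨e, he, ?_⟩
  have hth : 0 < th / 2 := by unfold th; norm_num
  have := le_of_mul_le_mul_right (he2.trans hq) hth
  exact_mod_cast this

lemma card_code (p r : ℕ) [Fact p.Prime] : Fintype.card (Code p r) = p ^ (2 * r) := by
  simp [Code, ZMod.card, pow_mul, sq]

/-- Count of the vectors that are nearly constant along some nonzero frequency on every block; `B`
bounds the size of the sets of values provided by the codes. -/
lemma count_all_bad {L : ℕ} (hN : 0 < N) (blk : Fin N → Fin L) (s B : ℝ) (hB : 0 ≤ B) (r q : ℕ)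
    (hr : (p : ℝ) * (1 - th / 2) ^ r < 1) (hq : r * s ≤ q * (th / 2))
    (E : Finset (Fin N → ZMod p))
    (hE : ∀ v ∈ E, ∀ l, (Tset s (univ.filter fun i => blk i = l) v).Nonempty ∧
      ∀ x : ℕ, (x : ℝ) ≤ 1 + p / (32 * #(Tset s (univ.filter fun i => blk i = l) v)) →
        (x : ℝ) ≤ B) :
    (#E : ℝ) ≤ (p : ℝ) ^ (2 * r * L) * (((N : ℝ) * p) ^ (q * L) * (B + 1 / N) ^ N) := by
  classical
  have key := count_codes (K := Fin L → Code p r) hN (fun e => ∀ l, (#(XS (e l)) : ℝ) ≤ B)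
    (fun e i => XS (e (blk i))) (q * L) ((B + 1 / N) ^ N) (by positivity) ?_ E ?_
  · refine key.trans (le_of_eq ?_)
    rw [Fintype.card_fun, card_code, Fintype.card_fin, ← pow_mul]
    push_cast
    rfl
  · intro e he
    refine (prod_le_pow univ _ (B + 1 / N) (fun _ _ => by positivity) fun i _ => ?_).trans_eq ?_
    · have := he (blk i)
      simpa using this
    · simp
  · intro v hv
    have h1 : ∀ l, ∃ e : Code p r, (#(XS e) : ℝ) ≤ B ∧
        #((univ.filter fun i => blk i = l).filter fun i => v i ∉ XS e) ≤ q := by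
      intro l
      obtain ⟨e, he, he2⟩ := exists_code' s _ v (hE v hv l).1 r q hr hq
      exact ⟨e, (hE v hv l).2 _ he, he2⟩
    choose e he he2 using h1
    refine ⟨e, he, ?_⟩
    have h3 : (univ.filter fun i => v i ∉ XS (e (blk i))) = univ.biUnion fun l : Fin L =>
        (univ.filter fun i => blk i = l).filter fun i => v i ∉ XS (e l) := by
      ext i
      simp
    rw [h3]
    refine card_biUnion_le.trans ?_
    refine (sum_le_card_nsmul univ _ q fun l _ => he2 l).trans_eq ?_
    simp [mul_comm]

/-- Count of the vectors that are nearly constant, along some nonzero frequency, on the set `D`. -/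
lemma count_one_bad (hN : 0 < N) (D : Finset (Fin N)) (s : ℝ) (r q : ℕ)
    (hr : (p : ℝ) * (1 - th / 2) ^ r < 1) (hq : r * s ≤ q * (th / 2))
    (E : Finset (Fin N → ZMod p)) (hE : ∀ v ∈ E, (Tset s D v).Nonempty) :
    (#E : ℝ) ≤ (p : ℝ) ^ (2 * r) * (((N : ℝ) * p) ^ q *
      ((1 + p / 32 + 1 / N) ^ #D * (p + 1 / N) ^ (N - #D))) := by
  classical
  have key := count_codes (K := Code p r) hN (fun e => (#(XS e) : ℝ) ≤ 1 + p / 32)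
    (fun e i => if i ∈ D then XS e else univ) q
    ((1 + p / 32 + 1 / N) ^ #D * (p + 1 / N) ^ (N - #D)) (by positivity) ?_ E ?_
  · refine key.trans (le_of_eq ?_)
    rw [card_code]
    push_cast
    rfl
  · intro e he
    rw [← prod_mul_prod_compl D]
    refine mul_le_mul ?_ ?_ (prod_nonneg fun _ _ => by positivity) (by positivity)
    · refine prod_le_pow D _ (1 + p / 32 + 1 / N) (fun _ _ => by positivity) fun i hi => ?_
      simp only [hi, if_true]
      linarith
    · refine (prod_le_pow Dᶜ _ (p + 1 / N) (fun _ _ => by positivity) fun i hi => ?_).trans_eq ?_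
      · have : i ∉ D := by simpa using hi
        simp [this, ZMod.card]
      · rw [card_compl, Fintype.card_fin]
  · intro v hv
    obtain ⟨e, he, he2⟩ := exists_code' s D v (hE v hv) r q hr hq
    refine ⟨e, he.trans ?_, ?_⟩
    · have h1 : (1 : ℝ) ≤ #(Tset s D v) := by exact_mod_cast (hE v hv).card_pos
      have : (p : ℝ) / (32 * #(Tset s D v)) ≤ p / 32 := by
        apply div_le_div_of_nonneg_left (by positivity) (by norm_num)
        linarith
      linarith
    · refine le_trans (card_le_card ?_) he2
      intro i hi
      simp only [mem_filter, mem_univ, true_and] at hi ⊢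
      by_cases h : i ∈ D
      · exact ⟨h, by simpa [h] using hi⟩
      · simp [h] at hi

end Bad

end Corank

namespace Corank

open Finset

section BadSum

variable {p : ℕ} [Fact p.Prime] {N : ℕ}

lemma sum_le_sum_cover {A B : Type*} (E : Finset A) (T : Finset B) (R : B → A → Prop)
    [∀ b, DecidablePred (R b)] (f : A → ℝ) (hf : ∀ v ∈ E, 0 ≤ f v)
    (h : ∀ v ∈ E, ∃ t ∈ T, R t v) :
    ∑ v ∈ E, f v ≤ ∑ t ∈ T, ∑ v ∈ E with R t v, f v := by
  simp_rw [sum_filter]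
  rw [sum_comm]
  refine sum_le_sum fun v hv => ?_
  obtain ⟨t, ht, hR⟩ := h v hv
  refine le_trans (le_of_eq ?_) (single_le_sum (f := fun t => if R t v then f v else 0)
    (fun t _ => ?_) ht)
  · simp [hR]
  · split_ifs
    · exact hf v hv
    · exact le_rfl

lemma sum_le_card_mul {A : Type*} (E : Finset A) (f : A → ℝ) (x y : ℝ) (hx : (#E : ℝ) ≤ x)
    (hy : 0 ≤ y) (hf : ∀ v ∈ E, f v ≤ y) : ∑ v ∈ E, f v ≤ x * y :=
  (sum_le_card_nsmul E f y hf).trans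
    (by rw [nsmul_eq_mul]; exact mul_le_mul_of_nonneg_right hx hy)

lemma SS_nonneg {d : ℕ} (κ : ℝ) (σ : ZMod p) (F : Fin N → Fin d → ZMod p) : 0 ≤ SS κ σ F :=
  sum_nonneg fun _ _ => (Real.exp_pos _).le

lemma one_add_inv_pow_le (hN : 0 < N) (k : ℕ) (hk : k ≤ N) : (1 + 1 / (N : ℝ)) ^ k ≤ 3 := by
  have hN' : (0 : ℝ) < N := by exact_mod_cast hN
  have h1 : (1 : ℝ) ≤ 1 + 1 / N := by
    have : (0 : ℝ) < 1 / N := by positivity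
    linarith
  calc (1 + 1 / (N : ℝ)) ^ k ≤ (1 + 1 / (N : ℝ)) ^ N := pow_le_pow_right₀ h1 hk
    _ ≤ (Real.exp (1 / N)) ^ N := by
        gcongr
        have := Real.add_one_le_exp (1 / (N : ℝ))
        linarith
    _ = Real.exp 1 := by
        rw [← Real.exp_nat_mul]
        congr 1
        field_simp
    _ ≤ 3 := by
        have := Real.exp_one_lt_d9
        linarith

/-- The part of the union bound coming from the vectors that are nearly constant on every block,
`τ` being the least number of frequencies witnessing this on a block. -/
lemma sum_level (hN : 0 < N) (κ : ℝ) (hκ : 0 ≤ κ) (σ : ZMod p) {L : ℕ}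
    (blk : Fin N → Fin L) (s : ℝ) (r q m2 : ℕ)
    (hr : (p : ℝ) * (1 - th / 2) ^ r < 1) (hq : r * s ≤ q * (th / 2))
    (hm2 : ∀ l, #(univ.filter fun i => blk i = l) ≤ m2)
    (hs : (p : ℝ) * Real.exp (-κ * (s / 4)) ≤ 1 / N) (τ : ℕ) (hτ : 1 ≤ τ)
    (E : Finset (Fin N → ZMod p))
    (hadm : ∀ v ∈ E, ∃ a b, ∀ j, v a - σ * v j ≠ 0 ∨ v b - σ * v j ≠ 0)
    (h1 : ∀ v ∈ E, ∀ l, τ ≤ #(Tset s (univ.filter fun i => blk i = l) v))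
    (h2 : ∀ v ∈ E, ∃ l, #(Tset s (univ.filter fun i => blk i = l) v) = τ) :
    ∑ v ∈ E, SS κ σ (sc v) / (p : ℝ) ^ N ≤
      (p : ℝ) ^ (2 * r * L) * ((N : ℝ) * p) ^ (q * L) *
        ((9 / 32) ^ N * (p : ℝ) ^ m2 + 3 * ze κ ^ (N - 2)) := by
  have hp0 : (0 : ℝ) < p := by exact_mod_cast (Fact.out : p.Prime).pos
  have hp1 : (1 : ℝ) ≤ p := by exact_mod_cast (Fact.out : p.Prime).one_le
  have hN1 : (1 : ℝ) ≤ N := by exact_mod_cast hN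
  have hNinv : (1 : ℝ) / N ≤ 1 := by rw [div_le_one (by positivity)]; exact hN1
  have hτ' : (1 : ℝ) ≤ τ := by exact_mod_cast hτ
  have hze := ze_pos κ
  set W := (p : ℝ) ^ (2 * r * L) * ((N : ℝ) * p) ^ (q * L) with hW
  have hW0 : 0 ≤ W := by positivity
  have hcount : ∀ B : ℝ, 0 ≤ B → (∀ x : ℕ, (x : ℝ) ≤ 1 + p / (32 * τ) → (x : ℝ) ≤ B) →
      (#E : ℝ) ≤ W * (B + 1 / N) ^ N := by
    intro B hB hx
    refine (count_all_bad hN blk s B hB r q hr hq E fun v hv l => ⟨?_, fun x hxl => ?_⟩).trans_eq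
      (by rw [hW]; ring)
    · rw [← card_pos]
      have := h1 v hv l
      omega
    · refine hx x (hxl.trans ?_)
      have : (τ : ℝ) ≤ #(Tset s (univ.filter fun i => blk i = l) v) := by exact_mod_cast h1 v hv l
      gcongr
  rcases le_or_gt (32 * (τ : ℝ)) p with hcase | hcase
  · -- few frequencies: the sum is tiny
    set x : ℝ := 3 * τ / p with hx
    have hx0 : 0 < x := by positivity
    have hx1 : x ≤ 3 / 32 := by
      rw [hx, div_le_iff₀ hp0]
      linarith
    have hxp : 1 / p ≤ x := by
      rw [hx]; gcongr; linarith
    have hps : ∀ v ∈ E, SS κ σ (sc v) / (p : ℝ) ^ N ≤ x ^ N * (p : ℝ) ^ m2 := by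
      intro v hv
      obtain ⟨l, hl⟩ := h2 v hv
      set D := univ.filter fun i => blk i = l
      have hDN : #D ≤ N := (card_le_univ D).trans_eq (Fintype.card_fin N)
      have h3 := SS_sc_le κ hκ σ s D v
      rw [hl] at h3
      have h4 : (τ : ℝ) + 1 + p * Real.exp (-κ * (s / 4)) ≤ x * p := by
        rw [hx, div_mul_cancel₀ _ hp0.ne']
        linarith
      have h5 : SS κ σ (sc v) ≤ (p : ℝ) ^ N * x ^ (N - #D) := by
        refine h3.trans ?_
        calc (p : ℝ) ^ #D * (τ + 1 + p * Real.exp (-κ * (s / 4))) ^ (N - #D)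
            ≤ (p : ℝ) ^ #D * (x * p) ^ (N - #D) := by gcongr
          _ = (p : ℝ) ^ (#D + (N - #D)) * x ^ (N - #D) := by rw [mul_pow, pow_add]; ring
          _ = _ := by rw [Nat.add_sub_cancel' hDN]
      rw [div_le_iff₀ (by positivity)]
      refine h5.trans ?_
      rw [mul_comm]
      refine mul_le_mul_of_nonneg_right ?_ (by positivity)
      have h6 : 1 ≤ (x * p) ^ #D := by
        apply one_le_pow₀
        rw [hx, div_mul_cancel₀ _ hp0.ne']
        linarith
      calc x ^ (N - #D) ≤ x ^ (N - #D) * (x * p) ^ #D := le_mul_of_one_le_right (by positivity) h6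
        _ = x ^ (N - #D + #D) * (p : ℝ) ^ #D := by rw [mul_pow, pow_add]; ring
        _ = x ^ N * (p : ℝ) ^ #D := by rw [Nat.sub_add_cancel hDN]
        _ ≤ x ^ N * (p : ℝ) ^ m2 := by
            have := hm2 l
            gcongr
    refine (sum_le_card_mul E _ _ _ (hcount (1 + p / (32 * τ)) (by positivity) fun _ h => h)
      (by positivity) hps).trans ?_
    have h7 : x * (1 + p / (32 * τ) + 1 / N) ≤ 9 / 32 := by
      have h8 : x * (p / (32 * τ)) = 3 / 32 := by
        rw [hx]; field_simp
      have h9 : x * (1 / N) ≤ x := mul_le_of_le_one_right hx0.le hNinv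
      nlinarith
    calc W * (1 + p / (32 * τ) + 1 / N) ^ N * (x ^ N * (p : ℝ) ^ m2)
        = W * ((x * (1 + p / (32 * τ) + 1 / N)) ^ N * (p : ℝ) ^ m2) := by rw [mul_pow]; ring
      _ ≤ W * ((9 / 32) ^ N * (p : ℝ) ^ m2) := by gcongr
      _ ≤ _ := by
          refine mul_le_mul_of_nonneg_left ?_ hW0
          have : 0 ≤ 3 * ze κ ^ (N - 2) := by positivity
          linarith
  · -- many frequencies: there are very few such vectors
    have hps : ∀ v ∈ E, SS κ σ (sc v) / (p : ℝ) ^ N ≤ ze κ ^ (N - 2) := by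
      intro v hv
      obtain ⟨a, b, hab⟩ := hadm v hv
      rw [div_le_iff₀ (by positivity), mul_comm]
      exact SS_sc_le_ze κ hκ σ v a b hab
    refine (sum_le_card_mul E _ _ _ (hcount 1 zero_le_one fun x hx => ?_)
      (by positivity) hps).trans ?_
    · have : (p : ℝ) / (32 * τ) < 1 := by rw [div_lt_one (by positivity)]; exact hcase
      have h3 : (x : ℝ) < 2 := by linarith
      have h4 : x < 2 := by exact_mod_cast h3
      have h5 : x ≤ 1 := by omega
      exact_mod_cast h5
    · have h3 := one_add_inv_pow_le hN N le_rfl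
      calc W * (1 + 1 / N) ^ N * ze κ ^ (N - 2) ≤ W * 3 * ze κ ^ (N - 2) := by gcongr
        _ = W * (3 * ze κ ^ (N - 2)) := by ring
        _ ≤ _ := by
          refine mul_le_mul_of_nonneg_left ?_ hW0
          have : 0 ≤ (9 / 32 : ℝ) ^ N * (p : ℝ) ^ m2 := by positivity
          linarith

/-- Union bound over the vectors that are nearly constant on some big block. If they are nearly
constant on all small blocks, there are too few of them; otherwise their Fourier sum is small. -/
lemma sum_bad (hN : 0 < N) (hp64 : 64 ≤ p) (κ : ℝ) (hκ : 0 ≤ κ) (σ : ZMod p) {L L' : ℕ}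
    (blk : Fin N → Fin L) (blk' : Fin N → Fin L') (s : ℝ) (r q m2 M : ℕ)
    (hr : (p : ℝ) * (1 - th / 2) ^ r < 1) (hq : r * s ≤ q * (th / 2))
    (hm2 : ∀ l, #(univ.filter fun i => blk i = l) ≤ m2)
    (hM : ∀ l, M ≤ #(univ.filter fun i => blk' i = l))
    (hs : (p : ℝ) * Real.exp (-κ * (s / 4)) ≤ 1 / N)
    (E : Finset (Fin N → ZMod p))
    (hadm : ∀ v ∈ E, ∃ a b, ∀ j, v a - σ * v j ≠ 0 ∨ v b - σ * v j ≠ 0)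
    (hbad : ∀ v ∈ E, ∃ l, (Tset s (univ.filter fun i => blk' i = l) v).Nonempty) :
    ∑ v ∈ E, SS κ σ (sc v) / (p : ℝ) ^ N ≤
      p * ((p : ℝ) ^ (2 * r * L) * ((N : ℝ) * p) ^ (q * L) *
        ((9 / 32) ^ N * (p : ℝ) ^ m2 + 3 * ze κ ^ (N - 2)))
      + L' * ((p : ℝ) ^ (2 * r) * ((N : ℝ) * p) ^ q * (3 * (1 / 16) ^ M) * (3 * (p : ℝ) ^ m2)) := by
  classical
  have hp0 : (0 : ℝ) < p := by exact_mod_cast (Fact.out : p.Prime).pos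
  have hp1 : (1 : ℝ) ≤ p := by exact_mod_cast (Fact.out : p.Prime).one_le
  have hp64' : (64 : ℝ) ≤ p := by exact_mod_cast hp64
  have hN1 : (1 : ℝ) ≤ N := by exact_mod_cast hN
  have hNinv : (1 : ℝ) / N ≤ 1 := by rw [div_le_one (by positivity)]; exact hN1
  have hze := ze_pos κ
  have hnn : ∀ v : Fin N → ZMod p, 0 ≤ SS κ σ (sc v) / (p : ℝ) ^ N := fun v =>
    div_nonneg (SS_nonneg _ _ _) (by positivity)
  set T : Fin L → (Fin N → ZMod p) → Finset (ZMod p) :=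
    fun l v => Tset s (univ.filter fun i => blk i = l) v with hT
  rw [← sum_filter_add_sum_filter_not E (fun v => ∀ l, (T l v).Nonempty)]
  refine add_le_add ?_ ?_
  · refine (sum_le_sum_cover _ (Icc 1 p) (fun τ v => (∀ l, τ ≤ #(T l v)) ∧ ∃ l, #(T l v) = τ) _
      (fun v _ => hnn v) ?_).trans ?_
    · intro v hv
      have hv2 := (mem_filter.mp hv).2
      obtain ⟨l, -, hl⟩ := exists_min_image univ (fun l => #(T l v)) ⟨blk ⟨0, hN⟩, mem_univ _⟩
      refine ⟨#(T l v), ?_, fun l' => hl l' (mem_univ _), l, rfl⟩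
      rw [mem_Icc]
      exact ⟨(hv2 l).card_pos, (card_le_univ _).trans_eq (ZMod.card p)⟩
    · refine (sum_le_card_nsmul _ _ (?_ : ℝ) fun τ hτ => ?_).trans_eq ?_
      · exact ((p : ℝ) ^ (2 * r * L) * ((N : ℝ) * p) ^ (q * L) *
          ((9 / 32) ^ N * (p : ℝ) ^ m2 + 3 * ze κ ^ (N - 2)))
      · refine sum_level hN κ hκ σ blk s r q m2 hr hq hm2 hs τ (mem_Icc.mp hτ).1 _ ?_ ?_ ?_
        · intro v hv
          exact hadm v (mem_filter.mp (mem_filter.mp hv).1).1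
        · intro v hv
          exact (mem_filter.mp hv).2.1
        · intro v hv
          exact (mem_filter.mp hv).2.2
      · rw [nsmul_eq_mul, Nat.card_Icc, Nat.add_sub_cancel]
  · refine (sum_le_sum_cover _ univ
      (fun l v => (Tset s (univ.filter fun i => blk' i = l) v).Nonempty) _
      (fun v _ => hnn v) ?_).trans ?_
    · intro v hv
      obtain ⟨l, hl⟩ := hbad v (mem_filter.mp hv).1
      exact ⟨l, mem_univ _, hl⟩
    · refine (sum_le_card_nsmul _ _ (?_ : ℝ) fun l _ => ?_).trans_eq ?_
      · exact ((p : ℝ) ^ (2 * r) * ((N : ℝ) * p) ^ q * (3 * (1 / 16) ^ M) * (3 * (p : ℝ) ^ m2))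
      · set D := univ.filter fun i => blk' i = l with hD
        have hDN : #D ≤ N := (card_le_univ D).trans_eq (Fintype.card_fin N)
        have hc := count_one_bad hN D s r q hr hq
          ((E.filter fun v => ¬ ∀ l, (T l v).Nonempty).filter fun v => (Tset s D v).Nonempty)
          (fun v hv => (mem_filter.mp hv).2)
        have hps : ∀ v ∈ (E.filter fun v => ¬ ∀ l, (T l v).Nonempty).filter
            fun v => (Tset s D v).Nonempty,
            SS κ σ (sc v) / (p : ℝ) ^ N ≤ 3 * (p : ℝ) ^ m2 / (p : ℝ) ^ N := by
          intro v hv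
          have hv2 := (mem_filter.mp (mem_filter.mp hv).1).2
          push Not at hv2
          obtain ⟨l0, hl0⟩ := hv2
          set D0 := univ.filter fun i => blk i = l0 with hD0
          have h3 := SS_sc_le κ hκ σ s D0 v
          have h0 : Tset s D0 v = ∅ := hl0
          rw [h0] at h3
          refine div_le_div_of_nonneg_right (h3.trans ?_) (by positivity)
          rw [mul_comm]
          have h5 := one_add_inv_pow_le hN (N - #D0) (Nat.sub_le _ _)
          refine mul_le_mul ?_ (pow_le_pow_right₀ hp1 (hm2 l0)) (by positivity) (by norm_num)
          refine le_trans (pow_le_pow_left₀ (by positivity) ?_ _) h5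
          simpa using hs
        refine (sum_le_card_mul _ _ _ _ hc (by positivity) hps).trans ?_
        have h6 : (1 + (p : ℝ) / 32 + 1 / N) ^ #D ≤ (p : ℝ) ^ #D * (1 / 16) ^ M := by
          calc (1 + (p : ℝ) / 32 + 1 / N) ^ #D ≤ (p * (1 / 16)) ^ #D := by
                gcongr
                linarith
            _ = (p : ℝ) ^ #D * (1 / 16) ^ #D := by rw [mul_pow]
            _ ≤ (p : ℝ) ^ #D * (1 / 16) ^ M := by
                refine mul_le_mul_of_nonneg_left ?_ (by positivity)
                exact pow_le_pow_of_le_one (by norm_num) (by norm_num) (hM l)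
        have h7 : ((p : ℝ) + 1 / N) ^ (N - #D) ≤ (p : ℝ) ^ (N - #D) * 3 := by
          have h5 := one_add_inv_pow_le hN (N - #D) (Nat.sub_le _ _)
          calc ((p : ℝ) + 1 / N) ^ (N - #D) ≤ (p * (1 + 1 / N)) ^ (N - #D) := by
                gcongr
                have : (1 : ℝ) / N ≤ p * (1 / N) := le_mul_of_one_le_left (by positivity) hp1
                linarith
            _ = (p : ℝ) ^ (N - #D) * (1 + 1 / N) ^ (N - #D) := by rw [mul_pow]
            _ ≤ _ := by gcongr
        have h8 : (1 + (p : ℝ) / 32 + 1 / N) ^ #D * ((p : ℝ) + 1 / N) ^ (N - #D)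
            ≤ (p : ℝ) ^ N * (3 * (1 / 16) ^ M) := by
          calc _ ≤ ((p : ℝ) ^ #D * (1 / 16) ^ M) * ((p : ℝ) ^ (N - #D) * 3) := by gcongr
            _ = (p : ℝ) ^ (#D + (N - #D)) * (3 * (1 / 16) ^ M) := by rw [pow_add]; ring
            _ = _ := by rw [Nat.add_sub_cancel' hDN]
        calc _ ≤ (p : ℝ) ^ (2 * r) * (((N : ℝ) * p) ^ q * ((p : ℝ) ^ N * (3 * (1 / 16) ^ M)))
              * (3 * (p : ℝ) ^ m2 / (p : ℝ) ^ N) := by gcongr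
          _ = _ := by
              have : (p : ℝ) ^ N ≠ 0 := by positivity
              field_simp
      · rw [nsmul_eq_mul, card_univ, Fintype.card_fin]

end BadSum

end Corank

namespace Corank

open Finset

/-! ### Tuples that are spread out on every block: structure of the main frequencies -/

section Nice

variable {p : ℕ} [Fact p.Prime] {N d : ℕ}

/-- No nontrivial combination of the coordinates of `F` is close to a constant on `D`. -/
def Nice (s : ℝ) (D : Finset (Fin N)) (F : Fin N → Fin d → ZMod p) : Prop :=
  ∀ u : Fin d → ZMod p, u ≠ 0 → ∀ b, s < ∑ i ∈ D, eta (u ⬝ᵥ F i - b)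

lemma Nice.mono {s : ℝ} {D D' : Finset (Fin N)} {F : Fin N → Fin d → ZMod p} (h : Nice s D F)
    (hD : D ⊆ D') : Nice s D' F := fun u hu b =>
  (h u hu b).trans_le (sum_le_sum_of_subset_of_nonneg hD fun _ _ _ => eta_nonneg _)

lemma Nice.eq_zero {s : ℝ} {D : Finset (Fin N)} {F : Fin N → Fin d → ZMod p} (h : Nice s D F)
    {u : Fin d → ZMod p} {b : ZMod p} (hb : ∑ i ∈ D, eta (u ⬝ᵥ F i - b) ≤ s) : u = 0 := by
  by_contra hu
  exact absurd hb (not_le.mpr (h u hu b))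

lemma Nice.card_T0 {s : ℝ} {D : Finset (Fin N)} {F : Fin N → Fin d → ZMod p} (h : Nice s D F) :
    #(T0 s D F) ≤ 1 := by
  have : T0 s D F ⊆ {0} := by
    intro u hu
    simp only [T0, mem_filter, mem_univ, true_and] at hu
    obtain ⟨b, hb⟩ := hu
    simp [h.eq_zero hb]
  simpa using card_le_card this

/-- On a spread-out block, the subset sums of the translates `F j - y` cover everything. -/
lemma Nice.cover {s : ℝ} {D : Finset (Fin N)} {F : Fin N → Fin d → ZMod p} (h : Nice s D F)
    (hs : (p : ℝ) ^ d * Real.exp (-(1 / 2) * s) < 1) (y f : Fin d → ZMod p) :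
    ∃ A ⊆ D, ∑ j ∈ A, (F j - y) = f := by
  classical
  by_contra! hcon
  have h0 : ∑ u : Fin d → ZMod p, ee (-(u ⬝ᵥ f)) * ∏ j ∈ D, (1 + ee (u ⬝ᵥ (F j - y))) = 0 := by
    have h1 : ∀ u : Fin d → ZMod p, ee (-(u ⬝ᵥ f)) * ∏ j ∈ D, (1 + ee (u ⬝ᵥ (F j - y)))
        = ∑ A ∈ D.powerset, ee (u ⬝ᵥ (∑ j ∈ A, (F j - y) - f)) := by
      intro u
      rw [prod_one_add, mul_sum]
      refine sum_congr rfl fun A _ => ?_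
      rw [← ee_sum, ← ee_add, dotProduct_sub, dotProduct_sum]
      congr 1
      ring
    simp_rw [h1]
    rw [sum_comm]
    refine sum_eq_zero fun A hA => ?_
    rw [sum_ee_dot, if_neg]
    exact sub_ne_zero.mpr (hcon A (mem_powerset.mp hA))
  rw [← add_sum_erase _ _ (mem_univ 0)] at h0
  have h2 : ee (-((0 : Fin d → ZMod p) ⬝ᵥ f)) * ∏ j ∈ D, (1 + ee ((0 : Fin d → ZMod p) ⬝ᵥ (F j - y)))
      = (2 : ℂ) ^ #D := by
    simp only [zero_dotProduct, neg_zero, ee_zero, one_mul, prod_const]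
    norm_num
  rw [h2] at h0
  have h3 : ∀ u ∈ univ.erase (0 : Fin d → ZMod p),
      ‖ee (-(u ⬝ᵥ f)) * ∏ j ∈ D, (1 + ee (u ⬝ᵥ (F j - y)))‖ ≤ 2 ^ #D * Real.exp (-(1 / 2) * s) := by
    intro u hu
    rw [norm_mul, ee_norm, one_mul, norm_prod]
    calc ∏ j ∈ D, ‖1 + ee (u ⬝ᵥ (F j - y))‖
        ≤ ∏ j ∈ D, (2 * Real.exp (-(1 / 2) * eta (u ⬝ᵥ (F j - y)))) :=
          prod_le_prod (fun _ _ => norm_nonneg _) fun _ _ => norm_one_add_ee_exp _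
      _ = 2 ^ #D * Real.exp (-(1 / 2) * ∑ j ∈ D, eta (u ⬝ᵥ (F j - y))) := by
          rw [prod_mul_distrib, prod_const, ← Real.exp_sum, mul_sum]
      _ ≤ _ := by
          refine mul_le_mul_of_nonneg_left ?_ (by positivity)
          rw [Real.exp_le_exp]
          have := h u (ne_of_mem_erase hu) (u ⬝ᵥ y)
          simp_rw [dotProduct_sub]
          linarith
  have h4 : (2 : ℝ) ^ #D ≤ (p : ℝ) ^ d * (2 ^ #D * Real.exp (-(1 / 2) * s)) := by
    have h5 : ‖(2 : ℂ) ^ #D‖ = 2 ^ #D := by simp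
    refine le_of_eq_of_le h5.symm ?_
    rw [eq_neg_of_add_eq_zero_left h0, norm_neg]
    refine (norm_sum_le _ _).trans ((sum_le_card_nsmul _ _ _ h3).trans ?_)
    rw [nsmul_eq_mul]
    refine mul_le_mul_of_nonneg_right ?_ (by positivity)
    have : #(univ.erase (0 : Fin d → ZMod p)) ≤ p ^ d := by
      refine (card_le_univ _).trans (le_of_eq ?_)
      simp [ZMod.card]
    exact_mod_cast this
  have h6 : (0 : ℝ) < 2 ^ #D := by positivity
  nlinarith

/-- A linear functional taking only values near zero vanishes. -/
lemma eq_zero_of_small (w : Fin d → ZMod p) (h : ∀ f : Fin d → ZMod p, eta (w ⬝ᵥ f) < 1 / 2) :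
    w = 0 := by
  classical
  by_contra hw
  obtain ⟨k, hk⟩ := Function.ne_iff.mp hw
  obtain ⟨t, ht⟩ := exists_eta_ge (p := p)
  have h1 := h (Pi.single k (t / w k))
  rw [dotProduct_single, mul_div_cancel₀ _ hk] at h1
  linarith

/-- `C` is an affine function of `F` on `D`. -/
def AffOn (D : Finset (Fin N)) (F C : Fin N → Fin d → ZMod p) : Prop :=
  ∃ (A : Matrix (Fin d) (Fin d) (ZMod p)) (h : Fin d → ZMod p), ∀ i ∈ D, C i = A.mulVec (F i) + h

/-- If every vertex `j` of a spread-out block can be given a value `c` making all coefficients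
towards `D` tiny, then `C` is affine on `D`. Indeed `f ↦ c` extends, by taking subset sums, to an
additive map. -/
lemma affOn_of_small {s : ℝ} (D D2 : Finset (Fin N)) (σ : ZMod p) (F C : Fin N → Fin d → ZMod p)
    (hD : Nice s D F) (hD2 : Nice s D2 F) (hs1 : 1 ≤ s)
    (hs : (p : ℝ) ^ d * Real.exp (-(1 / 2) * s) < 1) (m : ℝ) (hm : (#D2 : ℝ) ≤ m)
    (hne : D2.Nonempty) (κ' : ℝ) (hκ' : m ^ 2 * (4 * κ') ≤ 1 / 50)
    (hsm : ∀ j ∈ D2, ∃ c : Fin d → ZMod p,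
      ∑ i ∈ D, eta (C i ⬝ᵥ (F j - σ • F i) + c ⬝ᵥ (F i - σ • F j)) ≤ κ') :
    AffOn D F C := by
  classical
  rcases D.eq_empty_or_nonempty with rfl | ⟨i0, hi0⟩
  · exact ⟨0, 0, by simp⟩
  obtain ⟨j0, hj0⟩ := hne
  have hsm' : ∀ j, ∃ c : Fin d → ZMod p, j ∈ D2 →
      ∑ i ∈ D, eta (C i ⬝ᵥ (F j - σ • F i) + c ⬝ᵥ (F i - σ • F j)) ≤ κ' := fun j => by
    by_cases hj : j ∈ D2
    · obtain ⟨c, hc⟩ := hsm j hj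
      exact ⟨c, fun _ => hc⟩
    · exact ⟨0, fun h => absurd h hj⟩
  choose c hc using hsm'
  have hκ0 : 0 ≤ κ' := le_trans (sum_nonneg fun _ _ => eta_nonneg _) (hc j0 hj0)
  set e : Fin N → ZMod p := fun j => -(σ * (c j ⬝ᵥ F j - c j0 ⬝ᵥ F j0)) with he
  have hdiff : ∀ j ∈ D2, ∑ i ∈ D, eta (C i ⬝ᵥ (F j - F j0) + (c j - c j0) ⬝ᵥ F i + e j)
      ≤ 4 * κ' := by
    intro j hj
    calc ∑ i ∈ D, eta (C i ⬝ᵥ (F j - F j0) + (c j - c j0) ⬝ᵥ F i + e j)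
        ≤ ∑ i ∈ D, (2 * eta (C i ⬝ᵥ (F j - σ • F i) + c j ⬝ᵥ (F i - σ • F j))
          + 2 * eta (C i ⬝ᵥ (F j0 - σ • F i) + c j0 ⬝ᵥ (F i - σ • F j0))) := by
          refine sum_le_sum fun i _ => ?_
          refine le_of_eq_of_le ?_ (eta_sub _ _)
          congr 1
          simp only [he, sub_dotProduct, dotProduct_sub, dotProduct_smul, smul_eq_mul]
          ring
      _ ≤ 4 * κ' := by
          rw [sum_add_distrib, ← mul_sum, ← mul_sum]
          linarith [hc j hj, hc j0 hj0]
  have hP : ∀ f : Fin d → ZMod p, ∃ (g : Fin d → ZMod p) (b : ZMod p),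
      ∑ i ∈ D, eta (C i ⬝ᵥ f + g ⬝ᵥ F i + b) ≤ 1 / 50 := by
    intro f
    obtain ⟨A, hA, rfl⟩ := hD2.cover hs (F j0) f
    have hAm : (#A : ℝ) ≤ m := le_trans (by exact_mod_cast card_le_card hA) hm
    have hm0 : 0 ≤ m := le_trans (by positivity) hAm
    refine ⟨∑ j ∈ A, (c j - c j0), ∑ j ∈ A, e j, ?_⟩
    calc ∑ i ∈ D, eta (C i ⬝ᵥ ∑ j ∈ A, (F j - F j0) + (∑ j ∈ A, (c j - c j0)) ⬝ᵥ F i + ∑ j ∈ A, e j)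
        = ∑ i ∈ D, eta (∑ j ∈ A, (C i ⬝ᵥ (F j - F j0) + (c j - c j0) ⬝ᵥ F i + e j)) := by
          refine sum_congr rfl fun i _ => ?_
          rw [dotProduct_sum, sum_dotProduct, ← sum_add_distrib, ← sum_add_distrib]
      _ ≤ ∑ i ∈ D, #A * ∑ j ∈ A, eta (C i ⬝ᵥ (F j - F j0) + (c j - c j0) ⬝ᵥ F i + e j) :=
          sum_le_sum fun i _ => eta_sum _ _
      _ = #A * ∑ j ∈ A, ∑ i ∈ D, eta (C i ⬝ᵥ (F j - F j0) + (c j - c j0) ⬝ᵥ F i + e j) := by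
          rw [← mul_sum, sum_comm]
      _ ≤ #A * (#A * (4 * κ')) := by
          refine mul_le_mul_of_nonneg_left ?_ (by positivity)
          refine (sum_le_card_nsmul _ _ _ fun j hj => hdiff j (hA hj)).trans_eq ?_
          rw [nsmul_eq_mul]
      _ ≤ m * (m * (4 * κ')) := by gcongr
      _ ≤ 1 / 50 := by rw [← mul_assoc, ← sq]; exact hκ'
  choose g b hgb using hP
  have hadd : ∀ f f', g (f + f') = g f + g f' := by
    intro f f'
    have : g (f + f') - (g f + g f') = 0 := by
      refine hD.eq_zero (b := -(b (f + f') - (b f + b f'))) (le_trans ?_ hs1)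
      calc ∑ i ∈ D, eta ((g (f + f') - (g f + g f')) ⬝ᵥ F i - -(b (f + f') - (b f + b f')))
          ≤ ∑ i ∈ D, (2 * eta (C i ⬝ᵥ (f + f') + g (f + f') ⬝ᵥ F i + b (f + f'))
            + 2 * (2 * eta (C i ⬝ᵥ f + g f ⬝ᵥ F i + b f)
              + 2 * eta (C i ⬝ᵥ f' + g f' ⬝ᵥ F i + b f'))) := by
            refine sum_le_sum fun i _ => ?_
            refine le_trans (le_of_eq_of_le ?_ (eta_sub (C i ⬝ᵥ (f + f') + g (f + f') ⬝ᵥ F i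
              + b (f + f')) ((C i ⬝ᵥ f + g f ⬝ᵥ F i + b f) + (C i ⬝ᵥ f' + g f' ⬝ᵥ F i + b f')))) ?_
            · congr 1
              simp only [sub_dotProduct, add_dotProduct, dotProduct_add]
              ring
            · have := eta_add (C i ⬝ᵥ f + g f ⬝ᵥ F i + b f) (C i ⬝ᵥ f' + g f' ⬝ᵥ F i + b f')
              linarith
        _ ≤ 1 := by
            rw [sum_add_distrib, ← mul_sum, ← mul_sum, sum_add_distrib, ← mul_sum, ← mul_sum]
            linarith [hgb (f + f'), hgb f, hgb f']
    exact sub_eq_zero.mp this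
  let gl : (Fin d → ZMod p) →ₗ[ZMod p] (Fin d → ZMod p) :=
    (AddMonoidHom.mk' g hadd).toZModLinearMap p
  set B := LinearMap.toMatrix' gl with hB
  have hgB : ∀ f, g f = B.mulVec f := by
    intro f
    rw [hB, LinearMap.toMatrix'_mulVec]
    rfl
  set G : Fin N → Fin d → ZMod p := fun i => C i + B.transpose.mulVec (F i) with hG
  have hGf : ∀ i f, C i ⬝ᵥ f + g f ⬝ᵥ F i = G i ⬝ᵥ f := by
    intro i f
    rw [hgB, hG]
    simp only [add_dotProduct]
    rw [Matrix.mulVec_transpose, ← Matrix.dotProduct_mulVec, dotProduct_comm (B.mulVec f)]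
  have hGeq : ∀ i ∈ D, G i = G i0 := by
    intro i hi
    rw [← sub_eq_zero]
    refine eq_zero_of_small _ fun f => ?_
    have h1 : ∀ k ∈ D, eta (G k ⬝ᵥ f + b f) ≤ 1 / 50 := by
      intro k hk
      refine le_trans ?_ (hgb f)
      rw [← hGf]
      exact single_le_sum (f := fun i => eta (C i ⬝ᵥ f + g f ⬝ᵥ F i + b f))
        (fun _ _ => eta_nonneg _) hk
    have h2 := eta_sub (G i ⬝ᵥ f + b f) (G i0 ⬝ᵥ f + b f)
    have h3 : (G i - G i0) ⬝ᵥ f = G i ⬝ᵥ f + b f - (G i0 ⬝ᵥ f + b f) := by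
      rw [sub_dotProduct]; ring
    rw [h3]
    linarith [h1 i hi, h1 i0 hi0]
  refine ⟨-B.transpose, G i0, fun i hi => ?_⟩
  rw [← hGeq i hi, Matrix.neg_mulVec, hG]
  simp

/-- An affine relation on a spread-out set extends as soon as it extends to each further vertex. -/
lemma affOn_univ {s : ℝ} (hs0 : 0 ≤ s) (I : Finset (Fin N)) (F C : Fin N → Fin d → ZMod p)
    (hI : Nice s I F) (hne : I.Nonempty) (h : ∀ k, AffOn (insert k I) F C) : AffOn univ F C := by
  choose A g hA using h
  obtain ⟨i0, hi0⟩ := hne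
  have hAA : ∀ k, A k = A i0 := by
    intro k
    rw [← sub_eq_zero]
    ext x y
    have h1 : (A k - A i0) x = 0 := by
      refine hI.eq_zero (b := g i0 x - g k x) (le_of_eq_of_le ?_ hs0)
      refine sum_eq_zero fun i hi => ?_
      have h2 := (hA k i (mem_insert_of_mem hi)).symm.trans (hA i0 i (mem_insert_of_mem hi))
      have h3 := congrFun h2 x
      simp only [Pi.add_apply, Matrix.mulVec] at h3
      have h4 : (A k - A i0) x ⬝ᵥ F i - (g i0 x - g k x) = 0 := by
        have h5 : (A k - A i0) x = A k x - A i0 x := rfl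
        rw [h5, sub_dotProduct]
        linear_combination h3
      rw [h4, eta_zero]
    exact congrFun h1 y
  have hgg : ∀ k, g k = g i0 := by
    intro k
    have h2 := (hA k i0 (mem_insert_of_mem hi0)).symm.trans (hA i0 i0 (mem_insert_of_mem hi0))
    rw [hAA k] at h2
    exact add_left_cancel h2
  refine ⟨A i0, g i0, fun k _ => ?_⟩
  rw [hA k k (mem_insert_self _ _), hAA, hgg]

/-- The non-affine frequencies contribute a negligible amount. -/
lemma sum_nonaff {s : ℝ} {L : ℕ} (κ : ℝ) (hκ : 0 ≤ κ) (σ : ZMod p) (blk : Fin N → Fin L) (hL : 0 < L)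
    (F : Fin N → Fin d → ZMod p) (hF : ∀ l, Nice s (univ.filter fun i => blk i = l) F)
    (hs1 : 1 ≤ s) (hs : (p : ℝ) ^ d * Real.exp (-(1 / 2) * s) < 1) (m : ℕ)
    (hm : ∀ l, #(univ.filter fun i => blk i = l) ≤ m)
    (hne : ∀ l, (univ.filter fun i => blk i = l).Nonempty)
    (κ' : ℝ) (hκ'0 : 0 ≤ κ') (hκ' : (m : ℝ) ^ 2 * (4 * κ') ≤ 1 / 50) (hκκ' : κ * κ' ≤ 1)
    (hs2 : 3 * ((p : ℝ) ^ d * Real.exp (-κ * (s / 4))) ≤ 1 / N) (hN : 0 < N)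
    [DecidablePred fun C : Fin N → Fin d → ZMod p => ¬ AffOn univ F C] :
    ∑ C with ¬ AffOn univ F C, Real.exp (-κ * HH σ F C) ≤
      N * (((p : ℝ) ^ d) ^ (m + 1) * (3 * Real.exp (-κ * κ') ^ (L - 2))) := by
  classical
  set fb : Fin L → Finset (Fin N) := fun l => univ.filter fun i => blk i = l with hfb
  set I := fb ⟨0, hL⟩ with hI
  set ε := (p : ℝ) ^ d * Real.exp (-κ * (s / 4)) with hε
  have hε0 : 0 ≤ ε := by positivity
  have hp1 : (1 : ℝ) ≤ p := by exact_mod_cast (Fact.out : p.Prime).one_le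
  set δ := Real.exp (-κ * κ') with hδ
  have hδ0 : 0 < δ := Real.exp_pos _
  have hδ1 : δ ≤ 1 := Real.exp_le_one_iff.mpr (by nlinarith [mul_nonneg hκ hκ'0])
  have hδ3 : 1 / 3 ≤ δ := by
    have h1 : Real.exp (-1) ≤ δ := Real.exp_le_exp.mpr (by linarith)
    have h2 := Real.exp_one_lt_d9
    have h3 : 1 / 3 ≤ Real.exp (-1) := by
      rw [Real.exp_neg, one_div]
      exact inv_anti₀ (Real.exp_pos _) (by linarith)
    linarith
  refine (sum_le_sum_cover _ univ (fun k C => ¬ AffOn (insert k I) F C) _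
    (fun C _ => (Real.exp_pos _).le) ?_).trans ?_
  · intro C hC
    have hC2 := (mem_filter.mp hC).2
    by_contra! hcon
    exact hC2 (affOn_univ (by linarith) I F C (hF _) (hne _) fun k => hcon k (mem_univ k))
  refine (sum_le_card_nsmul _ _ (((p : ℝ) ^ d) ^ (m + 1) * (3 * δ ^ (L - 2)))
    fun k _ => ?_).trans_eq (by rw [nsmul_eq_mul, card_univ, Fintype.card_fin])
  set D := insert k I with hD
  have hDc : #D ≤ m + 1 := (card_insert_le _ _).trans (Nat.succ_le_succ (hm ⟨0, hL⟩))
  have hDn : Nice s D F := (hF ⟨0, hL⟩).mono (subset_insert _ _)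
  have h1 : ∑ C ∈ univ.filter (fun C => ¬ AffOn univ F C) with ¬ AffOn D F C,
      Real.exp (-κ * HH σ F C) ≤ ∑ C with ¬ AffOn D F C, Real.exp (-κ * HH σ F C) := by
    refine sum_le_sum_of_subset_of_nonneg ?_ fun _ _ _ => (Real.exp_pos _).le
    intro C hC
    simp only [mem_filter, mem_univ, true_and] at hC ⊢
    exact hC.2
  refine h1.trans ((sum_le_of_split κ hκ σ F D (fun C => ¬ AffOn D F C) ?_ (3 * δ ^ (L - 2))
    (by positivity) fun C hC => ?_).trans ?_)
  · rintro C C' hCC' hC ⟨A, h, hA⟩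
    exact hC ⟨A, h, fun i hi => (hCC' i hi).trans (hA i hi)⟩
  · -- a vertex is bad when no choice of its value makes the coefficients towards `D` tiny
    set bad : Fin N → Prop := fun j => ∀ c : Fin d → ZMod p,
      κ' ≤ ∑ i ∈ D, eta (C i ⬝ᵥ (F j - σ • F i) + c ⬝ᵥ (F i - σ • F j)) with hbad
    have hQ : ∀ j ∈ Dᶜ, Qf κ σ F D C j ≤ (1 + 3 * ε) * if bad j then δ else 1 := by
      intro j _
      have hT : (#(T0 s D F) : ℝ) ≤ 1 := by exact_mod_cast hDn.card_T0
      split_ifs with hj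
      · refine (Qf_le κ hκ σ F D C j s κ' hj).trans ?_
        rw [← hδ, ← hε]
        nlinarith
      · refine (Qf_le κ hκ σ F D C j s 0 fun c => sum_nonneg fun _ _ => eta_nonneg _).trans ?_
        rw [← hε, mul_zero, Real.exp_zero, mul_one, mul_one]
        linarith
    refine (prod_le_prod (fun j _ => Qf_nonneg _ _ _ _ _ _) hQ).trans ?_
    rw [prod_mul_distrib, prod_const, prod_ite, prod_const, prod_const_one, mul_one]
    have hcard : L - 2 ≤ #(Dᶜ.filter bad) := by
      have hsub : (univ \ {⟨0, hL⟩, blk k} : Finset (Fin L)) ⊆ (Dᶜ.filter bad).image blk := by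
        intro l hl
        simp only [Finset.mem_sdiff, mem_univ, true_and, mem_insert, mem_singleton, not_or] at hl
        by_contra hcon
        refine hC (affOn_of_small D (fb l) σ F C hDn (hF l) hs1 hs m (by exact_mod_cast hm l)
          (hne l) κ' hκ' fun j hj => ?_)
        have hjl : blk j = l := by simpa [hfb] using hj
        by_contra! hj2
        refine hcon (mem_image.mpr ⟨j, mem_filter.mpr ⟨?_, fun c => (hj2 c).le⟩, hjl⟩)
        rw [mem_compl, hD, mem_insert, not_or]
        constructor
        · rintro rfl
          exact hl.2 hjl.symm
        · intro hjI
          have : blk j = ⟨0, hL⟩ := by simpa [hI, hfb] using hjI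
          exact hl.1 (hjl.symm.trans this)
      have h3 := (card_le_card hsub).trans card_image_le
      have h4 := le_card_sdiff ({⟨0, hL⟩, blk k} : Finset (Fin L)) univ
      have h5 : #({⟨0, hL⟩, blk k} : Finset (Fin L)) ≤ 2 := card_le_two
      rw [card_univ, Fintype.card_fin] at h4
      omega
    have h6 : (1 + 3 * ε) ^ #Dᶜ ≤ 3 := by
      have hcN : #Dᶜ ≤ N := (card_le_univ _).trans_eq (Fintype.card_fin N)
      refine le_trans (pow_le_pow_left₀ (by positivity) ?_ _) (one_add_inv_pow_le hN _ hcN)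
      linarith
    refine mul_le_mul h6 ?_ (by positivity) (by norm_num)
    exact pow_le_pow_of_le_one hδ0.le hδ1 hcard
  · refine mul_le_mul_of_nonneg_right ?_ (by positivity)
    exact pow_le_pow_right₀ (one_le_pow₀ hp1) hDc

end Nice

end Corank

namespace Corank

open Finset

section Affine

variable {p : ℕ} [Fact p.Prime] {N d : ℕ}

/-- The affine frequency `i ↦ A F_i + h`. -/
def aff (F : Fin N → Fin d → ZMod p) (x : Matrix (Fin d) (Fin d) (ZMod p) × (Fin d → ZMod p)) :
    Fin N → Fin d → ZMod p := fun i => x.1.mulVec (F i) + x.2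

lemma Bf_aff (σ : ZMod p) (F : Fin N → Fin d → ZMod p)
    (x : Matrix (Fin d) (Fin d) (ZMod p) × (Fin d → ZMod p)) (i j : Fin N) :
    Bf σ F (aff F x) i j = (x.1 + x.1.transpose).mulVec (F i) ⬝ᵥ F j
      + (x.2 ⬝ᵥ F i - σ * (aff F x i ⬝ᵥ F i)) + (x.2 ⬝ᵥ F j - σ * (aff F x j ⬝ᵥ F j)) := by
  have h1 : x.1.transpose.mulVec (F i) ⬝ᵥ F j = x.1.mulVec (F j) ⬝ᵥ F i := by
    rw [Matrix.mulVec_transpose, ← Matrix.dotProduct_mulVec, dotProduct_comm]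
  unfold Bf aff
  rw [Matrix.add_mulVec]
  simp only [add_dotProduct, dotProduct_sub, dotProduct_smul, smul_eq_mul, h1]
  ring

/-- Only skew-symmetric affine frequencies have small coefficients. -/
lemma HH_aff_ge {s : ℝ} {L : ℕ} (σ : ZMod p) (blk : Fin N → Fin L) (hL : 2 ≤ L)
    (F : Fin N → Fin d → ZMod p) (hs0 : 0 ≤ s)
    (hF : ∀ l, Nice s (univ.filter fun i => blk i = l) F)
    (hne : ∀ l, (univ.filter fun i => blk i = l).Nonempty)
    (x : Matrix (Fin d) (Fin d) (ZMod p) × (Fin d → ZMod p))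
    (hx : ¬ (x.1 + x.1.transpose = 0 ∧ (σ = 0 → x.2 = 0))) : s / 2 ≤ HH σ F (aff F x) := by
  classical
  set S := x.1 + x.1.transpose with hS
  set φ : Fin N → ZMod p := fun i => x.2 ⬝ᵥ F i - σ * (aff F x i ⬝ᵥ F i) with hφ
  have hB : ∀ i j, Bf σ F (aff F x) i j = S.mulVec (F i) ⬝ᵥ F j + φ i + φ j := Bf_aff σ F x
  set l0 : Fin L := ⟨0, by omega⟩ with hl0
  set l1 : Fin L := ⟨1, by omega⟩ with hl1
  have hl01 : l0 ≠ l1 := by simp [hl0, hl1]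
  have hsub : ∀ D : Finset (Fin N), (∀ i ∈ D, blk i = l0) →
      (univ.filter fun i => blk i = l1) ⊆ Dᶜ := by
    intro D hD j hj
    rw [mem_compl]
    intro hjD
    exact hl01 ((hD j hjD).symm.trans (by simpa using hj))
  by_cases hS0 : S = 0
  · have hx2 : σ = 0 ∧ x.2 ≠ 0 := by
      by_contra hcon
      refine hx ⟨hS0, fun hσ => ?_⟩
      by_contra h2
      exact hcon ⟨hσ, h2⟩
    obtain ⟨i, hi⟩ := hne l0
    have hi0 : blk i = l0 := by simpa using hi
    refine le_trans ?_ (cross_le_HH σ F (aff F x) {i})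
    refine le_trans ?_ (sum_le_sum_of_subset_of_nonneg (hsub {i} (by simpa using hi0))
      fun j _ _ => sum_nonneg fun _ _ => eta_nonneg _)
    have h1 := hF l1 x.2 hx2.2 (-(x.2 ⬝ᵥ F i))
    have h2 : ∀ j, ∑ k ∈ ({i} : Finset (Fin N)), eta (Bf σ F (aff F x) k j)
        = eta (x.2 ⬝ᵥ F j - -(x.2 ⬝ᵥ F i)) := by
      intro j
      rw [sum_singleton, hB, hS0, Matrix.zero_mulVec, zero_dotProduct]
      simp only [hφ, hx2.1]
      congr 1
      ring
    simp_rw [h2]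
    linarith
  · obtain ⟨a, ha⟩ : ∃ a, S a ≠ 0 := by
      by_contra! hcon
      exact hS0 (funext hcon)
    obtain ⟨i, hi⟩ := hne l0
    have hi0 : blk i = l0 := by simpa using hi
    obtain ⟨i', hi', hii'⟩ : ∃ i', blk i' = l0 ∧ S a ⬝ᵥ F i' ≠ S a ⬝ᵥ F i := by
      by_contra! hcon
      have h1 := hF l0 (S a) ha (S a ⬝ᵥ F i)
      have h2 : ∑ k ∈ univ.filter (fun i => blk i = l0), eta (S a ⬝ᵥ F k - S a ⬝ᵥ F i) = 0 := by
        refine sum_eq_zero fun k hk => ?_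
        rw [hcon k (by simpa using hk), sub_self, eta_zero]
      linarith
    have hne' : i' ≠ i := fun h => hii' (by rw [h])
    set u := S.mulVec (F i') - S.mulVec (F i) with hu
    have hu0 : u ≠ 0 := by
      intro h
      have h3 := congrFun h a
      simp only [hu, Pi.sub_apply, Pi.zero_apply, sub_eq_zero] at h3
      exact hii' h3
    refine le_trans ?_ (cross_le_HH σ F (aff F x) {i', i})
    refine le_trans ?_ (sum_le_sum_of_subset_of_nonneg (hsub {i', i} (by simp [hi', hi0]))
      fun j _ _ => sum_nonneg fun _ _ => eta_nonneg _)
    have h1 := hF l1 u hu0 (-(φ i' - φ i))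
    have h2 : ∀ j, eta (u ⬝ᵥ F j - -(φ i' - φ i)) ≤
        2 * ∑ k ∈ ({i', i} : Finset (Fin N)), eta (Bf σ F (aff F x) k j) := by
      intro j
      rw [sum_pair hne', mul_add]
      refine le_of_eq_of_le ?_ (eta_sub _ _)
      rw [hB, hB, hu, sub_dotProduct]
      congr 1
      ring
    have h3 := h1.le.trans (sum_le_sum fun j _ => h2 j)
    rw [← mul_sum] at h3
    linarith

/-- For a spread-out tuple the Fourier sum is essentially the number of skew-symmetric affine
frequencies. -/
lemma SS_nice_le {s : ℝ} {L : ℕ} (κ : ℝ) (hκ : 0 ≤ κ) (σ : ZMod p) (blk : Fin N → Fin L)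
    (hL : 2 ≤ L) (F : Fin N → Fin d → ZMod p)
    (hF : ∀ l, Nice s (univ.filter fun i => blk i = l) F)
    (hs1 : 1 ≤ s) (hs : (p : ℝ) ^ d * Real.exp (-(1 / 2) * s) < 1) (m : ℕ)
    (hm : ∀ l, #(univ.filter fun i => blk i = l) ≤ m)
    (hne : ∀ l, (univ.filter fun i => blk i = l).Nonempty)
    (κ' : ℝ) (hκ'0 : 0 ≤ κ') (hκ' : (m : ℝ) ^ 2 * (4 * κ') ≤ 1 / 50) (hκκ' : κ * κ' ≤ 1)
    (hs2 : 3 * ((p : ℝ) ^ d * Real.exp (-κ * (s / 4))) ≤ 1 / N) (hN : 0 < N) (R : ℝ)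
    (hR : (#{x : Matrix (Fin d) (Fin d) (ZMod p) × (Fin d → ZMod p) |
      x.1 + x.1.transpose = 0 ∧ (σ = 0 → x.2 = 0)} : ℝ) ≤ R) :
    SS κ σ F ≤ R + (p : ℝ) ^ (d * d + d) * Real.exp (-κ * (s / 2))
      + N * (((p : ℝ) ^ d) ^ (m + 1) * (3 * Real.exp (-κ * κ') ^ (L - 2))) := by
  classical
  unfold SS
  rw [← sum_filter_add_sum_filter_not univ (fun C => AffOn univ F C)]
  refine add_le_add ?_ (sum_nonaff κ hκ σ blk (by omega) F hF hs1 hs m hm hne κ' hκ'0 hκ' hκκ'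
    hs2 hN)
  have h1 : ∑ C with AffOn univ F C, Real.exp (-κ * HH σ F C) ≤
      ∑ x : Matrix (Fin d) (Fin d) (ZMod p) × (Fin d → ZMod p),
        Real.exp (-κ * HH σ F (aff F x)) := by
    refine le_trans (sum_le_sum_of_subset_of_nonneg (t := univ.image (aff F)) ?_
      fun _ _ _ => (Real.exp_pos _).le) ?_
    · intro C hC
      obtain ⟨A, h, hA⟩ := (mem_filter.mp hC).2
      exact mem_image.mpr ⟨(A, h), mem_univ _, funext fun i => (hA i (mem_univ i)).symm⟩
    · exact sum_image_le_of_nonneg fun _ _ => (Real.exp_pos _).le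
  refine h1.trans ?_
  rw [← sum_filter_add_sum_filter_not univ (fun x : Matrix (Fin d) (Fin d) (ZMod p) ×
    (Fin d → ZMod p) => x.1 + x.1.transpose = 0 ∧ (σ = 0 → x.2 = 0))]
  refine add_le_add ?_ ?_
  · refine (sum_le_card_mul _ _ R 1 ?_ zero_le_one fun x _ => ?_).trans_eq (mul_one R)
    · convert hR
    · exact Real.exp_le_one_iff.mpr (by nlinarith [HH_nonneg σ F (aff F x)])
  · refine sum_le_card_mul _ _ _ _ ?_ (Real.exp_pos _).le fun x hx => ?_
    · have : #(univ.filter fun x : Matrix (Fin d) (Fin d) (ZMod p) × (Fin d → ZMod p) =>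
          ¬ (x.1 + x.1.transpose = 0 ∧ (σ = 0 → x.2 = 0))) ≤ p ^ (d * d + d) := by
        refine (card_le_univ _).trans (le_of_eq ?_)
        rw [Fintype.card_prod]
        have h3 : Fintype.card (Matrix (Fin d) (Fin d) (ZMod p)) = p ^ (d * d) := by
          rw [← Nat.card_eq_fintype_card]
          simp [Matrix, ZMod.card, pow_mul]
        rw [h3, pow_add]
        simp [ZMod.card]
      exact_mod_cast this
    · rw [Real.exp_le_exp, neg_mul, neg_mul, neg_le_neg_iff]
      exact mul_le_mul_of_nonneg_left
        (HH_aff_ge σ blk hL F (by linarith) hF hne x (mem_filter.mp hx).2) hκ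

lemma skew_two (hp : p ≠ 2) (A : Matrix (Fin 2) (Fin 2) (ZMod p)) (hA : A + A.transpose = 0) :
    A = !![0, A 0 1; -A 0 1, 0] := by
  have h2 : (2 : ZMod p) ≠ 0 := by
    intro h
    have h3 : ((2 : ℕ) : ZMod p) = 0 := by exact_mod_cast h
    rw [ZMod.natCast_eq_zero_iff] at h3
    exact hp ((Nat.prime_dvd_prime_iff_eq Fact.out Nat.prime_two).mp h3)
  have hd : ∀ i, A i i = 0 := by
    intro i
    have h3 := congrFun (congrFun hA i) i
    simp only [Matrix.add_apply, Matrix.transpose_apply, Matrix.zero_apply, ← two_mul] at h3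
    exact (mul_eq_zero.mp h3).resolve_left h2
  have h10 : A 1 0 = -A 0 1 := by
    have h3 := congrFun (congrFun hA 1) 0
    simp only [Matrix.add_apply, Matrix.transpose_apply, Matrix.zero_apply] at h3
    exact eq_neg_of_add_eq_zero_left h3
  ext i j
  fin_cases i <;> fin_cases j <;> simp [hd, h10]

lemma card_skew_zero (hp : p ≠ 2) :
    #{x : Matrix (Fin 2) (Fin 2) (ZMod p) × (Fin 2 → ZMod p) |
      x.1 + x.1.transpose = 0 ∧ ((0 : ZMod p) = 0 → x.2 = 0)} ≤ p := by
  refine le_trans (card_le_card_of_injOn (t := univ) (fun x => x.1 0 1) (fun _ _ => by simp) ?_)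
    (by simp [ZMod.card])
  intro x hx y hy hxy
  simp only [coe_filter, mem_univ, true_and, Set.mem_ofPred_eq, forall_const] at hx hy
  refine Prod.ext ?_ (hx.2.trans hy.2.symm)
  have hxy' : x.1 0 1 = y.1 0 1 := hxy
  rw [skew_two hp x.1 hx.1, skew_two hp y.1 hy.1, hxy']

lemma card_skew_one (hp : p ≠ 2) :
    #{x : Matrix (Fin 2) (Fin 2) (ZMod p) × (Fin 2 → ZMod p) |
      x.1 + x.1.transpose = 0 ∧ ((1 : ZMod p) = 0 → x.2 = 0)} ≤ p ^ 3 := by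
  refine le_trans (card_le_card_of_injOn (t := univ) (fun x => (x.1 0 1, x.2))
    (fun _ _ => by simp) ?_) (le_of_eq ?_)
  · intro x hx y hy hxy
    simp only [coe_filter, mem_univ, true_and, Set.mem_ofPred_eq] at hx hy
    simp only [Prod.mk.injEq] at hxy
    refine Prod.ext ?_ hxy.2
    rw [skew_two hp x.1 hx.1, skew_two hp y.1 hy.1, hxy.1]
  · simp [ZMod.card]
    ring

end Affine

end Corank

namespace Corank

open Finset

/-! ### From Fourier sums to the corank -/

section Core

variable {p : ℕ} [Fact p.Prime] {N : ℕ}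

/-- A space of dimension at least two contains many independent pairs. -/
lemma card_pairs (V : Submodule (ZMod p) (Fin N → ZMod p)) (hV : 2 ≤ Module.finrank (ZMod p) V) :
    (p : ℝ) ^ 4 / 4 ≤ Nat.card {t : Fin 2 → V // LinearIndependent (ZMod p) t} := by
  have hp2 : 2 ≤ p := (Fact.out : p.Prime).two_le
  rw [card_linearIndependent hV, Fin.prod_univ_two, ZMod.card]
  set n := Module.finrank (ZMod p) V
  have h1 : p ^ 2 ≤ p ^ n := Nat.pow_le_pow_right (by omega) hV
  have h2 : (p ^ 2 - 1) * (p ^ 2 - p) ≤ (p ^ n - p ^ (0 : Fin 2).val) * (p ^ n - p ^ (1 : Fin 2).val) := by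
    simp only [Fin.val_zero, Fin.val_one, pow_zero, pow_one]
    gcongr
  have h3 : ((p : ℝ) ^ 2 - 1) * ((p : ℝ) ^ 2 - p) ≤
      (((p ^ n - p ^ (0 : Fin 2).val) * (p ^ n - p ^ (1 : Fin 2).val) : ℕ) : ℝ) := by
    refine le_trans (le_of_eq ?_) (Nat.cast_le.mpr h2)
    rw [Nat.cast_mul, Nat.cast_sub (by nlinarith), Nat.cast_sub (by nlinarith)]
    push_cast
    ring
  refine le_trans ?_ h3
  have hp : (2 : ℝ) ≤ p := by exact_mod_cast hp2
  have h4 : (p : ℝ) ^ 2 / 2 ≤ (p : ℝ) ^ 2 - 1 := by nlinarith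
  have h5 : (p : ℝ) ^ 2 / 2 ≤ (p : ℝ) ^ 2 - p := by nlinarith
  calc (p : ℝ) ^ 4 / 4 = ((p : ℝ) ^ 2 / 2) * ((p : ℝ) ^ 2 / 2) := by ring
    _ ≤ _ := by gcongr; nlinarith

/-- All columns of `F` lie in `V`. -/
def ColsIn {d : ℕ} (V : Submodule (ZMod p) (Fin N → ZMod p)) (F : Fin N → Fin d → ZMod p) : Prop :=
  ∀ k, (fun i => F i k) ∈ V

/-- If the random kernel `Ker ω` has dimension at least two, then either it contains a vector that
is nearly constant on some block, or it contains at least `p ^ 4 / 4` spread-out pairs. The first event is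
estimated by a union bound, the second by Markov's inequality. -/
lemma corank_le {Ω : Type*} [MeasurableSpace Ω] [DiscreteMeasurableSpace Ω] (P : Measure Ω)
    [IsProbabilityMeasure P] (Ker : Ω → Submodule (ZMod p) (Fin N → ZMod p))
    (U : Finset (Fin N → ZMod p)) (hU : ∀ ω, ∀ v ∈ Ker ω, v ∈ U) (κ : ℝ) (σ : ZMod p)
    (h1 : ∀ v : Fin N → ZMod p, P.real {ω | v ∈ Ker ω} ≤ SS κ σ (sc v) / (p : ℝ) ^ N)
    (h2 : ∀ F : Fin N → Fin 2 → ZMod p,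
      P.real {ω | ColsIn (Ker ω) F} ≤ SS κ σ F / (p : ℝ) ^ (2 * N))
    {L : ℕ} (blk : Fin N → Fin L) (s : ℝ) (Abd B : ℝ)
    (hA : ∀ E : Finset (Fin N → ZMod p), (∀ v ∈ E, v ∈ U ∧ v ≠ 0 ∧
      ∃ l, (Tset s (univ.filter fun i => blk i = l) v).Nonempty) →
      ∑ v ∈ E, SS κ σ (sc v) / (p : ℝ) ^ N ≤ Abd) (hB0 : 0 ≤ B)
    (hB : ∀ F : Fin N → Fin 2 → ZMod p, (∀ l, Nice s (univ.filter fun i => blk i = l) F) →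
      SS κ σ F ≤ B) :
    P.real {ω | 2 ≤ Module.finrank (ZMod p) (Ker ω)} ≤
      Abd + (#U : ℝ) ^ 2 * (B / (p : ℝ) ^ (2 * N)) * 4 / (p : ℝ) ^ 4 := by
  classical
  have hp0 : (0 : ℝ) < p := by exact_mod_cast (Fact.out : p.Prime).pos
  set E : Finset (Fin N → ZMod p) := univ.filter fun v => v ∈ U ∧ v ≠ 0 ∧
      ∃ l, (Tset s (univ.filter fun i => blk i = l) v).Nonempty with hE
  set 𝓕 : Finset (Fin N → Fin 2 → ZMod p) := univ.filter fun F =>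
    (∀ k, (fun i => F i k) ∈ U) ∧ ∀ l, Nice s (univ.filter fun i => blk i = l) F with h𝓕
  set E1 : Set Ω := ⋃ v ∈ E, {ω | v ∈ Ker ω} with hE1
  set E2 : Set Ω := {ω | (p : ℝ) ^ 4 / 4 ≤ #(𝓕.filter fun F => ColsIn (Ker ω) F)} with hE2
  have hsub : {ω | 2 ≤ Module.finrank (ZMod p) (Ker ω)} ⊆ E1 ∪ E2 := by
    intro ω hω
    by_cases hω1 : ω ∈ E1
    · exact Or.inl hω1
    right
    have hω' : ∀ v ∈ Ker ω, v ≠ 0 → ∀ l, ¬ (Tset s (univ.filter fun i => blk i = l) v).Nonempty := by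
      intro v hv hv0 l hl
      apply hω1
      simp only [hE1, Set.mem_iUnion]
      exact ⟨v, by simp only [hE, mem_filter, mem_univ, true_and]; exact ⟨hU ω v hv, hv0, l, hl⟩, hv⟩
    refine (card_pairs (Ker ω) hω).trans ?_
    rw [Nat.card_eq_fintype_card]
    rw [Nat.cast_le, ← card_univ]
    refine card_le_card_of_injOn (fun t => fun i k => (t.1 k : Fin N → ZMod p) i) ?_ ?_
    · intro t _
      have hcol : ∀ k, (fun i => (t.1 k : Fin N → ZMod p) i) ∈ Ker ω := fun k => (t.1 k).2
      simp only [h𝓕, coe_filter, mem_filter, mem_univ, true_and, Set.mem_ofPred_eq]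
      refine ⟨⟨fun k => hU ω _ (hcol k), fun l u hu b => ?_⟩, hcol⟩
      have hv0 : (∑ k, u k • t.1 k) ≠ 0 := by
        intro h0
        exact hu (funext (Fintype.linearIndependent_iff.mp t.2 u h0))
      have h3 := hω' (∑ k, u k • t.1 k : Ker ω) (Submodule.coe_mem _)
        (fun h => hv0 (Subtype.ext h)) l
      rw [not_nonempty_iff_eq_empty] at h3
      have h4 : (1 : ZMod p) ∉ Tset s (univ.filter fun i => blk i = l)
        ((∑ k, u k • t.1 k : Ker ω) : Fin N → ZMod p) := by rw [h3]; simp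
      simp only [Tset, mem_filter, mem_univ, true_and, ne_eq, one_ne_zero, not_false_eq_true,
        not_exists, not_le, one_mul] at h4
      refine (h4 b).trans_eq (sum_congr rfl fun i _ => ?_)
      congr 2
    · intro t _ t' _ h
      refine Subtype.ext (funext fun k => Subtype.ext (funext fun i => ?_))
      exact congrFun (congrFun h i) k
  have hP1 : P.real E1 ≤ Abd := by
    refine le_trans ?_ (hA E fun v hv => (mem_filter.mp hv).2)
    refine (measureReal_biUnion_finset_le E _).trans ?_
    exact sum_le_sum fun v _ => h1 v
  have hcardF : (#𝓕 : ℝ) ≤ (#U : ℝ) ^ 2 := by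
    have h3 : #𝓕 ≤ #(Fintype.piFinset fun _ : Fin 2 => U) := by
      refine card_le_card_of_injOn (fun F k i => F i k) ?_ ?_
      · intro F hF
        simp only [h𝓕, coe_filter, mem_univ, true_and, Set.mem_ofPred_eq] at hF
        simpa using hF.1
      · intro F _ F' _ h
        funext i k
        exact congrFun (congrFun h k) i
    rw [Fintype.card_piFinset_const] at h3
    exact_mod_cast h3
  have hP2 : P.real E2 * ((p : ℝ) ^ 4 / 4) ≤ (#U : ℝ) ^ 2 * (B / (p : ℝ) ^ (2 * N)) := by
    have h_integrable : ∀ F : Fin N → Fin 2 → ZMod p,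
        Integrable (Set.indicator {ω | ColsIn (Ker ω) F} fun _ => (1 : ℝ)) P := fun F =>
      (integrable_const 1).indicator (MeasurableSet.of_discrete)
    have h3 : ∫ ω, Set.indicator E2 (fun _ => (p : ℝ) ^ 4 / 4) ω ∂P ≤
        ∫ ω, ∑ F ∈ 𝓕, Set.indicator {ω | ColsIn (Ker ω) F} (fun _ => (1 : ℝ)) ω ∂P := by
      refine integral_mono ((integrable_const _).indicator MeasurableSet.of_discrete)
        (integrable_finsetSum _ fun F _ => h_integrable F) fun ω => ?_
      have h4 : ∑ F ∈ 𝓕, Set.indicator {ω | ColsIn (Ker ω) F} (fun _ => (1 : ℝ)) ω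
          = #(𝓕.filter fun F => ColsIn (Ker ω) F) := by
        rw [card_filter]
        push_cast
        refine sum_congr rfl fun F _ => ?_
        simp [Set.indicator_apply]
      simp only [h4]
      by_cases hω : ω ∈ E2
      · rw [Set.indicator_of_mem hω]; exact hω
      · rw [Set.indicator_of_notMem hω]; positivity
    rw [integral_indicator_const _ MeasurableSet.of_discrete, smul_eq_mul,
      integral_finsetSum _ fun F _ => h_integrable F] at h3
    refine h3.trans ?_
    refine sum_le_card_mul _ _ _ _ hcardF (by positivity) fun F hF => ?_
    rw [integral_indicator_const _ MeasurableSet.of_discrete, smul_eq_mul, mul_one]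
    refine (h2 F).trans ?_
    exact div_le_div_of_nonneg_right (hB F (mem_filter.mp hF).2.2) (by positivity)
  calc P.real {ω | 2 ≤ Module.finrank (ZMod p) (Ker ω)} ≤ P.real (E1 ∪ E2) := measureReal_mono hsub
    _ ≤ P.real E1 + P.real E2 := measureReal_union_le _ _
    _ ≤ _ := by
      refine add_le_add hP1 ?_
      rw [le_div_iff₀ (by positivity)]
      linarith

end Core

end Corank

namespace Corank

open Finset

/-! ### From probabilities to Fourier sums -/

section Prob

variable {p : ℕ} [Fact p.Prime] {N d : ℕ}

lemma sum_upper {R : Type*} [CommRing R] (w : Fin N × Fin N → R) (G : Fin N → Fin N → R) :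
    ∑ i, ∑ j, (if i ≤ j then w (i, j) else w (j, i)) * G i j
      = ∑ q : Fin N × Fin N, w q * (if q.1 < q.2 then G q.1 q.2 + G q.2 q.1
          else if q.1 = q.2 then G q.1 q.1 else 0) := by
  have h1 : ∀ i j, (if i ≤ j then w (i, j) else w (j, i)) * G i j
      = w (i, j) * (if i < j then G i j else if i = j then G i i else 0)
        + (if j < i then w (j, i) * G i j else 0) := by
    intro i j
    rcases lt_trichotomy i j with h | h | h
    · simp [h, h.le, h.not_gt]
    · subst h; simp
    · simp [h, h.not_gt, h.ne', h.not_ge]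
  simp only [h1, sum_add_distrib]
  rw [Fintype.sum_prod_type, sum_comm (f := fun i j => if j < i then w (j, i) * G i j else 0),
    ← sum_add_distrib]
  refine sum_congr rfl fun i _ => ?_
  rw [← sum_add_distrib]
  refine sum_congr rfl fun j _ => ?_
  rcases lt_trichotomy i j with h | h | h
  · simp [h]; ring
  · subst h; simp
  · simp [h.not_gt, h.ne']

lemma Bf_smul (σ : ZMod p) (F C : Fin N → Fin d → ZMod p) (t : ZMod p) (i j : Fin N) :
    Bf σ F (t • C) i j = t * Bf σ F C i j := by
  simp [Bf, smul_dotProduct, mul_add]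
  ring

/-- The probability that the random symmetric matrix (or Laplacian) kills all columns of `F`,
bounded by the Fourier sum `SS`. The hypothesis `hchar` bounds the characteristic function of a
single entry. -/
lemma prob_le {X : Type*} [MeasurableSpace X] [Countable X] [MeasurableSingletonClass X]
    (ν : Measure X) [IsProbabilityMeasure ν] (val : X → ZMod p) (κ : ℝ) (d0 : ZMod p)
    (hd0 : d0 ≠ 0) (hκ : 0 ≤ κ)
    (hchar : ∀ t : ZMod p, ‖∫ x, ee (val x * t) ∂ν‖ ≤ Real.exp (-κ * eta (d0 * t)))
    (σ : ZMod p) (F : Fin N → Fin d → ZMod p) :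
    (Measure.pi fun _ : Fin N × Fin N => ν).real
      {x | ∀ i k, ∑ j, (if i ≤ j then val (x (i, j)) else val (x (j, i)))
        * (F j k - σ * F i k) = 0} ≤ SS κ σ F / (p : ℝ) ^ (d * N) := by
  classical
  set P := Measure.pi fun _ : Fin N × Fin N => ν with hP
  set a : (Fin N × Fin N → X) → Fin N → Fin N → ZMod p :=
    fun x i j => if i ≤ j then val (x (i, j)) else val (x (j, i)) with ha
  set Rw : (Fin N × Fin N → X) → Fin N × Fin d → ZMod p :=
    fun x q => ∑ j, a x q.1 j * (F j q.2 - σ * F q.1 q.2) with hRw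
  set A : Set (Fin N × Fin N → X) := {x | ∀ i k, Rw x (i, k) = 0} with hA
  have hp0 : (0 : ℝ) < p := by exact_mod_cast (Fact.out : p.Prime).pos
  set G : (Fin N → Fin d → ZMod p) → Fin N → Fin N → ZMod p :=
    fun C i j => C i ⬝ᵥ (F j - σ • F i) with hG
  set co : (Fin N → Fin d → ZMod p) → Fin N × Fin N → ZMod p :=
    fun C q => if q.1 < q.2 then G C q.1 q.2 + G C q.2 q.1
      else if q.1 = q.2 then G C q.1 q.1 else 0 with hco
  have hdot : ∀ x (C : Fin N → Fin d → ZMod p),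
      (fun q : Fin N × Fin d => C q.1 q.2) ⬝ᵥ Rw x = ∑ q, val (x q) * co C q := by
    intro x C
    rw [hco, ← sum_upper (fun q => val (x q)) (G C)]
    simp only [dotProduct, hRw, hG, Fintype.sum_prod_type]
    refine sum_congr rfl fun i _ => ?_
    simp only [mul_sum]
    rw [sum_comm]
    refine sum_congr rfl fun j _ => sum_congr rfl fun k _ => ?_
    simp only [ha, Pi.sub_apply, Pi.smul_apply, smul_eq_mul]
    ring
  have hind : ∀ x, A.indicator (fun _ => ((p : ℂ) ^ (d * N))) x
      = ∑ C : Fin N → Fin d → ZMod p, ∏ q, ee (val (x q) * co C q) := by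
    intro x
    have h1 := sum_ee_dot (Rw x)
    rw [← (Equiv.curry (Fin N) (Fin d) (ZMod p)).symm.sum_comp] at h1
    have h2 : ∀ C : Fin N → Fin d → ZMod p,
        ee ((Equiv.curry (Fin N) (Fin d) (ZMod p)).symm C ⬝ᵥ Rw x)
          = ∏ q, ee (val (x q) * co C q) := by
      intro C
      rw [← ee_sum, ← hdot]
      rfl
    simp only [h2] at h1
    rw [h1]
    by_cases hx : x ∈ A
    · have : Rw x = 0 := by ext q; exact hx q.1 q.2
      rw [Set.indicator_of_mem hx, if_pos this]
      simp [mul_comm]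
    · have : Rw x ≠ 0 := fun h => hx fun i k => by rw [h]; rfl
      rw [Set.indicator_of_notMem hx, if_neg this]
  have hmeasA : MeasurableSet A := MeasurableSet.of_discrete
  have h_integrable : ∫ x, A.indicator (fun _ => ((p : ℂ) ^ (d * N))) x ∂P
      = (P.real A : ℂ) * (p : ℂ) ^ (d * N) := by
    rw [integral_indicator_const _ hmeasA]
    simp
  have hC : ∀ C : Fin N → Fin d → ZMod p, Integrable (fun x => ∏ q, ee (val (x q) * co C q)) P := by
    intro C
    refine Integrable.of_bound (C := 1) (Measurable.of_discrete.aestronglyMeasurable) ?_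
    filter_upwards with x
    rw [norm_prod]
    simp
  have hbd : ∀ C : Fin N → Fin d → ZMod p,
      ‖∫ x, ∏ q, ee (val (x q) * co C q) ∂P‖ ≤ Real.exp (-κ * HH σ F (d0 • C)) := by
    intro C
    rw [hP, integral_fintype_prod_eq_prod (fun q y => ee (val y * co C q)), norm_prod]
    calc ∏ q, ‖∫ y, ee (val y * co C q) ∂ν‖
        ≤ ∏ q : Fin N × Fin N, Real.exp (-κ * if q.1 < q.2 then eta (Bf σ F (d0 • C) q.1 q.2)
            else 0) := by
          refine prod_le_prod (fun _ _ => norm_nonneg _) fun q _ => ?_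
          refine (hchar _).trans ?_
          by_cases hq : q.1 < q.2
          · rw [if_pos hq, Bf_smul]
            simp only [hco, if_pos hq, hG, Bf]
            exact le_rfl
          · rw [if_neg hq, mul_zero, Real.exp_zero]
            rw [Real.exp_le_one_iff]
            have := mul_nonneg hκ (eta_nonneg (d0 * co C q))
            linarith
      _ = Real.exp (-κ * HH σ F (d0 • C)) := by
          rw [← Real.exp_sum, ← mul_sum, HH, Fintype.sum_prod_type]
  have hfin : P.real A * (p : ℝ) ^ (d * N) ≤ SS κ σ F := by
    have h1 : ‖(P.real A : ℂ) * (p : ℂ) ^ (d * N)‖ = P.real A * (p : ℝ) ^ (d * N) := by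
      simp
    rw [← h1, ← h_integrable]
    simp only [hind]
    rw [integral_finsetSum _ fun C _ => hC C]
    refine (norm_sum_le _ _).trans ((sum_le_sum fun C _ => hbd C).trans ?_)
    rw [SS]
    exact ((Equiv.smulRight hd0 : (Fin N → Fin d → ZMod p) ≃ _).sum_comp
      (fun C => Real.exp (-κ * HH σ F C))).le
  rw [le_div_iff₀ (by positivity)]
  exact hfin

/-- A balanced distribution is not concentrated on one integer. -/
lemma exists_atoms {α : ℝ} (hα : 0 < α) (μ : Measure ℤ) [IsProbabilityMeasure μ]
    (hbal : IsBalanced α μ) :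
    ∃ a b : ℤ, a ≠ b ∧ 0 < μ.real {a} ∧ 0 < μ.real {b} := by
  have key : ∀ S : Set ℤ, μ S ≠ 0 → ∃ a ∈ S, 0 < μ.real {a} := by
    intro S hS
    by_contra! h
    apply hS
    rw [← Set.biUnion_of_singleton S]
    refine (measure_biUnion_null_iff S.to_countable).2 fun a ha => ?_
    have := le_antisymm (h a ha) measureReal_nonneg
    rwa [measureReal_eq_zero_iff] at this
  obtain ⟨a, -, ha⟩ := key Set.univ (by simp)
  have hb : μ {a}ᶜ ≠ 0 := by
    intro h0
    have h1 : μ {a} = 1 := (prob_compl_eq_zero_iff (measurableSet_singleton a)).1 h0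
    have h2 := hbal 2 Nat.prime_two (a : ZMod 2)
    have h3 : μ {a} ≤ μ {x : ℤ | (x : ZMod 2) = (a : ZMod 2)} :=
      measure_mono (by rintro x rfl; rfl)
    have h4 : ENNReal.ofReal (1 - α) < 1 := by
      rw [ENNReal.ofReal_lt_one]; linarith
    rw [h1] at h3
    exact absurd (h3.trans h2) (not_le.2 h4)
  obtain ⟨b, hb, hb'⟩ := key _ hb
  exact ⟨a, b, fun h => hb (by simp [h]), ha, hb'⟩

lemma char_sym (μ : Measure ℤ) [IsProbabilityMeasure μ] {a b : ℤ} (hab : a ≠ b) {lam : ℝ}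
    (hlam : 0 ≤ lam) (ha : lam ≤ μ.real {a}) (hb : lam ≤ μ.real {b}) (t : ZMod p) :
    ‖∫ x : ℤ, ee ((x : ZMod p) * t) ∂μ‖
      ≤ Real.exp (-lam * eta (((b - a : ℤ) : ZMod p) * t)) := by
  set f : ℤ → ℂ := fun x => ee ((x : ZMod p) * t) with hf
  have hn : ∀ x, ‖f x‖ = 1 := fun x => ee_norm _
  have h_integrable : Integrable f μ := Integrable.of_bound (C := 1)
    Measurable.of_discrete.aestronglyMeasurable (by filter_upwards with x using (hn x).le)
  set T : Set ℤ := {a} ∪ {b} with hT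
  have hdis : Disjoint ({a} : Set ℤ) {b} := by simpa using hab
  have hTm : MeasurableSet T := MeasurableSet.of_discrete
  have h1 : ∫ x, f x ∂μ = ((μ.real {a} : ℂ) * f a + (μ.real {b} : ℂ) * f b)
      + ∫ x in Tᶜ, f x ∂μ := by
    rw [← integral_add_compl hTm h_integrable, hT, setIntegral_union hdis MeasurableSet.of_discrete
      h_integrable.integrableOn h_integrable.integrableOn, integral_singleton, integral_singleton]
    simp
  have h2 : ‖∫ x in Tᶜ, f x ∂μ‖ ≤ 1 - (μ.real {a} + μ.real {b}) := by
    have := norm_setIntegral_le_of_norm_le_const (f := f) (μ := μ) (s := Tᶜ) (C := 1)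
      (measure_lt_top _ _) (fun x _ => (hn x).le)
    rw [probReal_compl_eq_one_sub hTm, hT,
      measureReal_union hdis MeasurableSet.of_discrete] at this
    linarith
  have h3 : (μ.real {a} : ℂ) * f a + (μ.real {b} : ℂ) * f b
      = (lam : ℂ) * (f a * (1 + ee (((b - a : ℤ) : ZMod p) * t)))
        + (((μ.real {a} - lam : ℝ) : ℂ) * f a + ((μ.real {b} - lam : ℝ) : ℂ) * f b) := by
    have : f b = f a * ee (((b - a : ℤ) : ZMod p) * t) := by
      simp only [hf]
      rw [← ee_add]
      congr 1
      push_cast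
      ring
    rw [this]
    push_cast
    ring
  have h4 : ‖(lam : ℂ) * (f a * (1 + ee (((b - a : ℤ) : ZMod p) * t)))‖
      ≤ lam * (2 - eta (((b - a : ℤ) : ZMod p) * t)) := by
    rw [norm_mul, norm_mul, hn, one_mul, Complex.norm_real, Real.norm_of_nonneg hlam]
    gcongr
    refine (norm_one_add_ee _).trans ?_
    have e1 := eta_le_one (((b - a : ℤ) : ZMod p) * t)
    have e0 := eta_nonneg (((b - a : ℤ) : ZMod p) * t)
    have := Real.sqrt_le_left (x := 1 - eta (((b - a : ℤ) : ZMod p) * t))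
      (y := 1 - eta (((b - a : ℤ) : ZMod p) * t) / 2) (by linarith)
    have := this.2 (by nlinarith)
    linarith
  have h5 : ‖((μ.real {a} - lam : ℝ) : ℂ) * f a‖ = μ.real {a} - lam := by
    rw [norm_mul, hn, mul_one, Complex.norm_real, Real.norm_of_nonneg (by linarith)]
  have h6 : ‖((μ.real {b} - lam : ℝ) : ℂ) * f b‖ = μ.real {b} - lam := by
    rw [norm_mul, hn, mul_one, Complex.norm_real, Real.norm_of_nonneg (by linarith)]
  rw [h1, h3]
  have h7 := Real.add_one_le_exp (-lam * eta (((b - a : ℤ) : ZMod p) * t))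
  refine (norm_add_le _ _).trans ?_
  have h8 := norm_add_le ((lam : ℂ) * (f a * (1 + ee (((b - a : ℤ) : ZMod p) * t))))
    (((μ.real {a} - lam : ℝ) : ℂ) * f a + ((μ.real {b} - lam : ℝ) : ℂ) * f b)
  have h9 := norm_add_le (((μ.real {a} - lam : ℝ) : ℂ) * f a) (((μ.real {b} - lam : ℝ) : ℂ) * f b)
  linarith

/-- The fair coin. -/
def coin : Measure Bool := (PMF.uniformOfFintype Bool).toMeasure

instance : IsProbabilityMeasure coin := by unfold coin; infer_instance

lemma coin_real (b : Bool) : coin.real {b} = 1 / 2 := by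
  rw [coin, Measure.real, PMF.toMeasure_apply_singleton _ _ (measurableSet_singleton b)]
  simp

lemma char_coin (t : ZMod p) :
    ‖∫ x : Bool, ee ((if x then 1 else 0 : ZMod p) * t) ∂coin‖
      ≤ Real.exp (-(1 / 2) * eta (1 * t)) := by
  rw [integral_fintype (Integrable.of_finite)]
  simp only [coin_real, Fintype.sum_bool, if_true, Bool.false_eq_true, if_false, zero_mul,
    ee_zero, one_mul]
  rw [← smul_add, norm_smul, add_comm]
  have := norm_one_add_ee_exp t
  rw [Real.norm_of_nonneg (by norm_num)]
  linarith

lemma graphMeasure_eq (n : ℕ) : graphMeasure n = Measure.pi fun _ => coin := by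
  refine Measure.ext_of_singleton fun x => ?_
  rw [graphMeasure, PMF.toMeasure_apply_singleton _ _ (measurableSet_singleton x),
    Measure.pi_singleton]
  have : ∀ b, coin {b} = 2⁻¹ := fun b => by
    rw [coin, PMF.toMeasure_apply_singleton _ _ (measurableSet_singleton b)]
    simp
  simp [this, ENNReal.inv_pow]

end Prob

end Corank

namespace Corank

open Finset

/-! ### Choice of parameters -/

section Params

variable {p N : ℕ}

/-- Partition of `Fin N` into blocks of size between `a` and `2 a`. -/
lemma exists_blocks {a : ℕ} (ha : 0 < a) (haN : a ≤ N) :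
    ∃ blk : Fin N → Fin (N / a), ∀ l, a ≤ #{i | blk i = l} ∧ #{i | blk i = l} ≤ 2 * a := by
  have hL : 0 < N / a := Nat.div_pos haN ha
  refine ⟨fun i => ⟨min (i / a) (N / a - 1), by omega⟩, fun l => ⟨?_, ?_⟩⟩
  · have hl : (l : ℕ) * a + a ≤ N := by
      have h1 := l.2
      have h2 : ((l : ℕ) + 1) * a ≤ N / a * a := Nat.mul_le_mul_right _ h1
      have h3 := Nat.div_mul_le_self N a
      nlinarith
    calc a = #(univ : Finset (Fin a)) := by simp
      _ ≤ _ := by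
        refine card_le_card_of_injOn
          (fun t => (⟨(l : ℕ) * a + t, by have := t.2; omega⟩ : Fin N)) ?_ ?_
        · intro t _
          have : ((l : ℕ) * a + t) / a = l := by
            rw [mul_comm, Nat.mul_add_div ha, Nat.div_eq_of_lt t.2, add_zero]
          simp only [coe_filter, mem_univ, true_and, Set.mem_ofPred_eq, Fin.ext_iff, this]
          have := l.2
          omega
        · intro t _ t' _ h
          simp only [Fin.mk.injEq, add_right_inj] at h
          exact Fin.ext h
  · refine le_trans (b := #(Finset.Ico ((l : ℕ) * a) ((l : ℕ) * a + 2 * a))) ?_ (by simp)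
    · refine card_le_card_of_injOn (fun i => (i : ℕ)) ?_ (fun i _ j _ h => Fin.ext h)
      intro i hi
      simp only [coe_filter, mem_univ, true_and, Set.mem_ofPred_eq, Fin.ext_iff] at hi
      simp only [coe_Ico, Set.mem_Ico]
      have h1 : (l : ℕ) ≤ i / a := by omega
      have h3 : (l : ℕ) * a ≤ i := by
        calc (l : ℕ) * a ≤ i / a * a := Nat.mul_le_mul_right _ h1
          _ ≤ i := Nat.div_mul_le_self _ _
      refine ⟨h3, ?_⟩
      have h4 : (i : ℕ) / a < l + 2 := by
        rcases Nat.lt_or_ge (i / a) (N / a - 1) with h | h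
        · omega
        · have : (i : ℕ) / a ≤ N / a := Nat.div_le_div_right i.2.le
          omega
      have := (Nat.div_lt_iff_lt_mul ha).1 h4
      linarith

lemma pow_le_exp {y x : ℝ} (hy : 0 ≤ y) (h : y ≤ Real.exp x) (k : ℕ) :
    y ^ k ≤ Real.exp (k * x) := by
  rw [Real.exp_nat_mul]
  exact pow_le_pow_left₀ hy h k

/-- Estimate of the first error term of `sum_bad`. -/
lemma num_bad_one {l L : ℕ} {z δ : ℝ} (hδ : 0 < δ) (hδ1 : δ ≤ 1) (hz0 : 0 ≤ z)
    (hz : z ≤ Real.exp (-δ)) (hl : 1000000 ≤ δ * l) (hp : (p : ℝ) ≤ Real.exp l)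
    (hNl : (N : ℝ) ≤ Real.exp l) (hN : l ^ 100 ≤ N) (hL : L * l ^ 7 ≤ N) :
    (p : ℝ) * ((p : ℝ) ^ (2 * l ^ 2 * L) * (N * p : ℝ) ^ (l ^ 5 * L)
      * ((9 / 32 : ℝ) ^ N * (p : ℝ) ^ (2 * l ^ 7) + 3 * z ^ (N - 2))) ≤ Real.exp (-l) := by
  set x : ℝ := (l : ℝ) with hx
  have hx1 : 1000000 ≤ x := by
    have : 0 ≤ x := by positivity
    nlinarith
  have hNr : x ^ 100 ≤ (N : ℝ) := by rw [hx]; exact_mod_cast hN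
  have hLr : (L : ℝ) * x ^ 7 ≤ N := by rw [hx]; exact_mod_cast hL
  have hp0 : (0 : ℝ) ≤ p := by positivity
  have hN2 : 2 ≤ N := by
    have : (2 : ℝ) ≤ N := by
      calc (2 : ℝ) ≤ x := by linarith
        _ ≤ x ^ 100 := le_self_pow₀ (by linarith) (by norm_num)
        _ ≤ N := hNr
    exact_mod_cast this
  have hxN : 1000000 * x ^ 99 ≤ δ * N := by
    calc 1000000 * x ^ 99 ≤ (δ * x) * x ^ 99 := by gcongr
      _ = δ * x ^ 100 := by ring
      _ ≤ δ * N := by gcongr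
  have h8 : x ^ 8 ≤ x ^ 99 := pow_le_pow_right₀ (by linarith) (by norm_num)
  have hxx : x ≤ x ^ 8 := le_self_pow₀ (by linarith) (by norm_num)
  have hLx : 1000000 * (x ^ 6 * L) ≤ δ * N := by
    calc 1000000 * (x ^ 6 * L) ≤ (δ * x) * (x ^ 6 * L) := by gcongr
      _ = δ * (L * x ^ 7) := by ring
      _ ≤ δ * N := by gcongr
  have hLx3 : x ^ 3 * L ≤ x ^ 6 * L := by
    gcongr
    · linarith
    · norm_num
  have e1 : (p : ℝ) ^ (2 * l ^ 2 * L) ≤ Real.exp (2 * (x ^ 3 * L)) := by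
    refine (pow_le_exp hp0 hp _).trans (Real.exp_le_exp.2 (le_of_eq ?_))
    push_cast; ring
  have e2 : (N * p : ℝ) ^ (l ^ 5 * L) ≤ Real.exp (2 * (x ^ 6 * L)) := by
    have : (N * p : ℝ) ≤ Real.exp (2 * x) := by
      rw [two_mul, Real.exp_add]; gcongr
    refine (pow_le_exp (by positivity) this _).trans (Real.exp_le_exp.2 (le_of_eq ?_))
    push_cast; ring
  have e3 : (9 / 32 : ℝ) ^ N ≤ Real.exp (-(δ * N)) := by
    have h1 : (9 / 32 : ℝ) ≤ Real.exp (-δ) := by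
      have : Real.exp (-1) ≤ Real.exp (-δ) := Real.exp_le_exp.2 (by linarith)
      have h2 := Real.exp_neg_one_gt_d9
      linarith
    refine (pow_le_exp (by norm_num) h1 _).trans (Real.exp_le_exp.2 (le_of_eq ?_))
    ring
  have e4 : (p : ℝ) ^ (2 * l ^ 7) ≤ Real.exp (2 * x ^ 8) := by
    refine (pow_le_exp hp0 hp _).trans (Real.exp_le_exp.2 (le_of_eq ?_))
    push_cast; ring
  have e5 : z ^ (N - 2) ≤ Real.exp (-(δ * N) + 2 * x ^ 8) := by
    refine (pow_le_exp hz0 hz _).trans (Real.exp_le_exp.2 ?_)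
    push_cast [hN2]
    nlinarith
  have e6 : (4 : ℝ) ≤ Real.exp 2 := by
    have := Real.exp_one_gt_d9
    have h : Real.exp 2 = Real.exp 1 * Real.exp 1 := by rw [← Real.exp_add]; norm_num
    rw [h]; nlinarith
  have e7 : (9 / 32 : ℝ) ^ N * (p : ℝ) ^ (2 * l ^ 7) + 3 * z ^ (N - 2)
      ≤ Real.exp (2 + (-(δ * N) + 2 * x ^ 8)) := by
    have : (9 / 32 : ℝ) ^ N * (p : ℝ) ^ (2 * l ^ 7) ≤ Real.exp (-(δ * N) + 2 * x ^ 8) := by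
      rw [Real.exp_add]; gcongr
    rw [Real.exp_add 2]
    nlinarith [Real.exp_pos (-(δ * N) + 2 * x ^ 8)]
  have e7' : 0 ≤ (9 / 32 : ℝ) ^ N * (p : ℝ) ^ (2 * l ^ 7) + 3 * z ^ (N - 2) := by positivity
  calc _ ≤ Real.exp x * (Real.exp (2 * (x ^ 3 * L)) * Real.exp (2 * (x ^ 6 * L))
        * Real.exp (2 + (-(δ * N) + 2 * x ^ 8))) := by gcongr
    _ = Real.exp (x + 2 * (x ^ 3 * L) + 2 * (x ^ 6 * L) + (2 + (-(δ * N) + 2 * x ^ 8))) := by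
        simp only [← Real.exp_add]; congr 1; ring
    _ ≤ _ := by
        rw [Real.exp_le_exp]
        linarith

/-- Estimate of the second error term of `sum_bad`. -/
lemma num_bad_two {l L' : ℕ} (hl : 1000000 ≤ l) (hp : (p : ℝ) ≤ Real.exp l)
    (hNl : (N : ℝ) ≤ Real.exp l) (hL' : L' ≤ N) :
    (L' : ℝ) * ((p : ℝ) ^ (2 * l ^ 2) * (N * p : ℝ) ^ (l ^ 5) * (3 * (1 / 16 : ℝ) ^ (l ^ 9))
      * (3 * (p : ℝ) ^ (2 * l ^ 7))) ≤ Real.exp (-l) := by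
  set x : ℝ := (l : ℝ) with hx
  have hx1 : 1000000 ≤ x := by rw [hx]; exact_mod_cast hl
  have hp0 : (0 : ℝ) ≤ p := by positivity
  have hLr : (L' : ℝ) ≤ Real.exp x := le_trans (by exact_mod_cast hL') hNl
  have e1 : (p : ℝ) ^ (2 * l ^ 2) ≤ Real.exp (2 * x ^ 3) := by
    refine (pow_le_exp hp0 hp _).trans (Real.exp_le_exp.2 (le_of_eq ?_))
    push_cast; ring
  have e2 : (N * p : ℝ) ^ (l ^ 5) ≤ Real.exp (2 * x ^ 6) := by
    have : (N * p : ℝ) ≤ Real.exp (2 * x) := by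
      rw [two_mul, Real.exp_add]; gcongr
    refine (pow_le_exp (by positivity) this _).trans (Real.exp_le_exp.2 (le_of_eq ?_))
    push_cast; ring
  have e3 : (1 / 16 : ℝ) ^ (l ^ 9) ≤ Real.exp (-x ^ 9) := by
    have h1 : (1 / 16 : ℝ) ≤ Real.exp (-1) := by
      have h2 := Real.exp_neg_one_gt_d9
      linarith
    refine (pow_le_exp (by norm_num) h1 _).trans (Real.exp_le_exp.2 (le_of_eq ?_))
    push_cast; ring
  have e4 : (p : ℝ) ^ (2 * l ^ 7) ≤ Real.exp (2 * x ^ 8) := by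
    refine (pow_le_exp hp0 hp _).trans (Real.exp_le_exp.2 (le_of_eq ?_))
    push_cast; ring
  have e6 : (3 : ℝ) ≤ Real.exp 2 := by
    have := Real.add_one_le_exp 2
    linarith
  have h3 : x ^ 3 ≤ x ^ 8 := pow_le_pow_right₀ (by linarith) (by norm_num)
  have h6 : x ^ 6 ≤ x ^ 8 := pow_le_pow_right₀ (by linarith) (by norm_num)
  have hxx : x ≤ x ^ 8 := le_self_pow₀ (by linarith) (by norm_num)
  have h9 : 1000000 * x ^ 8 ≤ x ^ 9 := by
    calc 1000000 * x ^ 8 ≤ x * x ^ 8 := by gcongr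
      _ = x ^ 9 := by ring
  calc _ ≤ Real.exp x * (Real.exp (2 * x ^ 3) * Real.exp (2 * x ^ 6)
        * (Real.exp 2 * Real.exp (-x ^ 9)) * (Real.exp 2 * Real.exp (2 * x ^ 8))) := by gcongr
    _ = Real.exp (x + 2 * x ^ 3 + 2 * x ^ 6 + 2 - x ^ 9 + 2 + 2 * x ^ 8) := by
        simp only [← Real.exp_add]; congr 1; ring
    _ ≤ _ := by
        rw [Real.exp_le_exp]
        linarith

/-- Estimate of the error terms of `SS_nice_le`. -/
lemma num_nice {l L' : ℕ} {κ δ : ℝ} (hδ : 0 < δ) (hδκ : δ ≤ κ)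
    (hl : 1000000 ≤ δ * l) (hδ1 : δ ≤ 1) (hp : (p : ℝ) ≤ Real.exp l)
    (hNl : (N : ℝ) ≤ Real.exp l) (hN : l ^ 100 ≤ N) (hL' : N ≤ 2 * (L' * l ^ 9)) :
    (p : ℝ) ^ (2 * 2 + 2) * Real.exp (-κ * ((l : ℝ) ^ 2 / 2)) + N * (((p : ℝ) ^ 2) ^ (2 * l ^ 9 + 1)
      * (3 * Real.exp (-κ * (1 / (1000 * (l : ℝ) ^ 18))) ^ (L' - 2))) ≤ 2 := by
  set x : ℝ := (l : ℝ) with hx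
  have hx1 : 1000000 ≤ x := by
    have : 0 ≤ x := by positivity
    nlinarith
  have hx0 : 0 < x := by linarith
  have hNr : x ^ 100 ≤ (N : ℝ) := by rw [hx]; exact_mod_cast hN
  have hLr : (N : ℝ) ≤ 2 * (L' * x ^ 9) := by rw [hx]; exact_mod_cast hL'
  have hp0 : (0 : ℝ) ≤ p := by positivity
  have hL91 : x ^ 91 ≤ 2 * (L' : ℝ) := by
    have : x ^ 9 * x ^ 91 ≤ x ^ 9 * (2 * L') := by
      calc x ^ 9 * x ^ 91 = x ^ 100 := by ring
        _ ≤ _ := hNr.trans (hLr.trans_eq (by ring))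
    exact le_of_mul_le_mul_left this (by positivity)
  have hx91 : x ≤ x ^ 91 := le_self_pow₀ (by linarith) (by norm_num)
  have hL2 : 2 ≤ L' := by
    have : (2 : ℝ) ≤ L' := by linarith
    exact_mod_cast this
  have a1 : (p : ℝ) ^ (2 * 2 + 2) * Real.exp (-κ * (x ^ 2 / 2)) ≤ 1 := by
    calc (p : ℝ) ^ (2 * 2 + 2) * Real.exp (-κ * (x ^ 2 / 2))
        ≤ Real.exp ((6 : ℕ) * x) * Real.exp (-κ * (x ^ 2 / 2)) := by
          gcongr; exact pow_le_exp hp0 hp 6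
      _ ≤ 1 := by
        rw [← Real.exp_add, Real.exp_le_one_iff]
        push_cast
        have : 1000000 * x ≤ κ * x * x := by
          gcongr; nlinarith
        nlinarith
  have a2 : ((p : ℝ) ^ 2) ^ (2 * l ^ 9 + 1) ≤ Real.exp (4 * x ^ 10 + 2 * x) := by
    rw [← pow_mul]
    refine (pow_le_exp hp0 hp _).trans (Real.exp_le_exp.2 (le_of_eq ?_))
    push_cast; ring
  have a3 : Real.exp (-κ * (1 / (1000 * x ^ 18))) ^ (L' - 2) ≤ Real.exp (-(100 * x ^ 10)) := by
    rw [← Real.exp_nat_mul, Real.exp_le_exp]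
    push_cast [hL2]
    have h1 : x ^ 91 / 4 ≤ (L' : ℝ) - 2 := by linarith
    have h2 : 100 * x ^ 10 ≤ (x ^ 91 / 4) * (κ * (1 / (1000 * x ^ 18))) := by
      have : (x ^ 91 / 4) * (κ * (1 / (1000 * x ^ 18))) = (κ * x) * x ^ 72 / 4000 := by
        field_simp
        ring
      rw [this]
      have h3 : x ^ 10 ≤ x ^ 72 := pow_le_pow_right₀ (by linarith) (by norm_num)
      have h4 : 1000000 * x ^ 72 ≤ (κ * x) * x ^ 72 := by gcongr; nlinarith
      have h6 : 0 ≤ x ^ 10 := by positivity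
      linarith
    have h3 : 0 ≤ κ * (1 / (1000 * x ^ 18)) := by
      have : 0 ≤ κ := by linarith
      positivity
    nlinarith [mul_le_mul_of_nonneg_right h1 h3]
  have e6 : (3 : ℝ) ≤ Real.exp 2 := by
    have := Real.add_one_le_exp 2
    linarith
  have a4 : N * (((p : ℝ) ^ 2) ^ (2 * l ^ 9 + 1)
      * (3 * Real.exp (-κ * (1 / (1000 * x ^ 18))) ^ (L' - 2))) ≤ 1 := by
    calc _ ≤ Real.exp x * (Real.exp (4 * x ^ 10 + 2 * x)
          * (Real.exp 2 * Real.exp (-(100 * x ^ 10)))) := by gcongr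
      _ = Real.exp (x + 4 * x ^ 10 + 2 * x + 2 - 100 * x ^ 10) := by
        simp only [← Real.exp_add]; congr 1; ring
      _ ≤ 1 := by
        rw [Real.exp_le_one_iff]
        have : x ≤ x ^ 10 := le_self_pow₀ (by linarith) (by norm_num)
        linarith
  linarith

end Params

end Corank

namespace Corank

open Finset

/-! ### The corank bound with parameters inserted -/

section Core

variable {p : ℕ} [Fact p.Prime] {N : ℕ}

/-- The corank bound common to both models. The parameters are powers of `l`, an upper bound for
`log p` and `log N` which is itself at most a tiny power of `N`: closeness threshold `l ^ 2`, small
blocks of size about `l ^ 7`, big blocks of size about `l ^ 9`. -/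
lemma corank_core {Ω : Type*} [MeasurableSpace Ω] [DiscreteMeasurableSpace Ω] (P : Measure Ω)
    [IsProbabilityMeasure P] (Ker : Ω → Submodule (ZMod p) (Fin N → ZMod p))
    (U : Finset (Fin N → ZMod p)) (hU : ∀ ω, ∀ v ∈ Ker ω, v ∈ U) (κ : ℝ) (hκ : 0 < κ)
    (hκ1 : κ ≤ 1) (σ : ZMod p)
    (hadm : ∀ v ∈ U, v ≠ 0 → ∃ a b, ∀ j, v a - σ * v j ≠ 0 ∨ v b - σ * v j ≠ 0)
    (h1 : ∀ v : Fin N → ZMod p, P.real {ω | v ∈ Ker ω} ≤ SS κ σ (sc v) / (p : ℝ) ^ N)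
    (h2 : ∀ F : Fin N → Fin 2 → ZMod p,
      P.real {ω | ColsIn (Ker ω) F} ≤ SS κ σ F / (p : ℝ) ^ (2 * N))
    (R : ℝ) (hR1 : 1 ≤ R)
    (hR : (#{x : Matrix (Fin 2) (Fin 2) (ZMod p) × (Fin 2 → ZMod p) |
      x.1 + x.1.transpose = 0 ∧ (σ = 0 → x.2 = 0)} : ℝ) ≤ R)
    (hp64 : 64 ≤ p) (l : ℕ) (hl : 1000000 ≤ (1 - Real.exp (-κ)) / 2 * l)
    (hp : (p : ℝ) ≤ Real.exp l) (hNl : (N : ℝ) ≤ Real.exp l) (hN : l ^ 100 ≤ N) :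
    P.real {ω | 2 ≤ Module.finrank (ZMod p) (Ker ω)} ≤
      2 * Real.exp (-l) + (#U : ℝ) ^ 2 * (3 * R / (p : ℝ) ^ (2 * N)) * 4 / (p : ℝ) ^ 4 := by
  set δ : ℝ := (1 - Real.exp (-κ)) / 2 with hδ
  have hδ0 : 0 < δ := by
    have : Real.exp (-κ) < 1 := by rw [Real.exp_lt_one_iff]; linarith
    rw [hδ]; linarith
  have hδκ : δ ≤ κ := by
    have := Real.add_one_le_exp (-κ)
    rw [hδ]; linarith
  have hδ1 : δ ≤ 1 := hδκ.trans hκ1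
  have hz : ze κ ≤ Real.exp (-δ) := by
    have := Real.add_one_le_exp (-δ)
    unfold ze
    rw [hδ] at this ⊢
    linarith
  set x : ℝ := (l : ℝ) with hx
  have hx1 : 1000000 ≤ x := by
    have : 0 ≤ x := by positivity
    nlinarith
  have hl1 : 1000000 ≤ l := by rw [hx] at hx1; exact_mod_cast hx1
  have hκx : 1000000 ≤ κ * x := by nlinarith
  have hl0 : 1 ≤ l := by omega
  have hpow : ∀ k, k ≤ 100 → l ^ k ≤ N := fun k hk => (Nat.pow_le_pow_right hl0 hk).trans hN
  have hN0 : 0 < N := lt_of_lt_of_le (by positivity) (hpow 1 (by norm_num))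
  have hNr0 : (0 : ℝ) < N := by exact_mod_cast hN0
  obtain ⟨blk, hblk⟩ := exists_blocks (N := N) (a := l ^ 7) (by positivity) (hpow 7 (by norm_num))
  obtain ⟨blk', hblk'⟩ := exists_blocks (N := N) (a := l ^ 9) (by positivity)
    (hpow 9 (by norm_num))
  have hp0 : (0 : ℝ) < p := by exact_mod_cast (Fact.out : p.Prime).pos
  have hNinv : Real.exp (-x) ≤ 1 / N := by
    rw [Real.exp_neg, ← one_div]
    exact one_div_le_one_div_of_le hNr0 hNl
  have hs2 : 3 * ((p : ℝ) ^ 2 * Real.exp (-κ * (x ^ 2 / 4))) ≤ 1 / N := by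
    refine le_trans ?_ hNinv
    have e6 : (3 : ℝ) ≤ Real.exp 2 := by
      have := Real.add_one_le_exp 2
      linarith
    calc 3 * ((p : ℝ) ^ 2 * Real.exp (-κ * (x ^ 2 / 4)))
        ≤ Real.exp 2 * (Real.exp ((2 : ℕ) * x) * Real.exp (-κ * (x ^ 2 / 4))) := by
          gcongr
          exact pow_le_exp hp0.le hp 2
      _ = Real.exp (2 + 2 * x + -κ * (x ^ 2 / 4)) := by
          simp only [← Real.exp_add]; congr 1; push_cast; ring
      _ ≤ _ := by
          rw [Real.exp_le_exp]
          nlinarith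
  have hs : (p : ℝ) * Real.exp (-κ * (x ^ 2 / 4)) ≤ 1 / N := by
    refine le_trans ?_ hs2
    have h1 : (p : ℝ) ≤ (p : ℝ) ^ 2 :=
      le_self_pow₀ (by exact_mod_cast (Fact.out : p.Prime).one_le) (by norm_num)
    have h2 := Real.exp_pos (-κ * (x ^ 2 / 4))
    have h3 := mul_le_mul_of_nonneg_right h1 h2.le
    have h4 : 0 ≤ (p : ℝ) ^ 2 * Real.exp (-κ * (x ^ 2 / 4)) := by positivity
    linarith
  have hs0 : (p : ℝ) ^ 2 * Real.exp (-(1 / 2) * x ^ 2) < 1 := by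
    calc (p : ℝ) ^ 2 * Real.exp (-(1 / 2) * x ^ 2)
        ≤ Real.exp ((2 : ℕ) * x) * Real.exp (-(1 / 2) * x ^ 2) := by
          gcongr
          exact pow_le_exp hp0.le hp 2
      _ < 1 := by
        rw [← Real.exp_add, Real.exp_lt_one_iff]
        push_cast
        nlinarith
  have hr : (p : ℝ) * (1 - th / 2) ^ (l ^ 2) < 1 := by
    have h1 : (1 - th / 2 : ℝ) ≤ Real.exp (-(1 / 65536)) := by
      have := Real.add_one_le_exp (-(1 / 65536 : ℝ))
      unfold th
      linarith
    calc (p : ℝ) * (1 - th / 2) ^ (l ^ 2)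
        ≤ Real.exp x * Real.exp ((l ^ 2 : ℕ) * (-(1 / 65536))) := by
          have h0 : (0 : ℝ) ≤ 1 - th / 2 := by unfold th; norm_num
          exact mul_le_mul hp (pow_le_exp h0 h1 _) (pow_nonneg h0 _) (Real.exp_pos _).le
      _ < 1 := by
        rw [← Real.exp_add, Real.exp_lt_one_iff]
        push_cast
        rw [← hx]
        nlinarith
  have hq : ((l ^ 2 : ℕ) : ℝ) * x ^ 2 ≤ ((l ^ 5 : ℕ) : ℝ) * (th / 2) := by
    push_cast
    rw [← hx]
    unfold th
    have : 1000000 * x ^ 4 ≤ x * x ^ 4 := by gcongr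
    have h4 : 0 ≤ x ^ 4 := by positivity
    nlinarith
  have hLdiv : N / l ^ 7 * l ^ 7 ≤ N := Nat.div_mul_le_self _ _
  have hL'div : N ≤ 2 * (N / l ^ 9 * l ^ 9) := by
    have h1 := Nat.div_add_mod N (l ^ 9)
    have h2 := Nat.mod_lt N (show 0 < l ^ 9 by positivity)
    have h3 : 1 ≤ N / l ^ 9 := Nat.div_pos (hpow 9 (by norm_num)) (by positivity)
    have h4 : l ^ 9 ≤ N / l ^ 9 * l ^ 9 := Nat.le_mul_of_pos_left _ h3
    rw [mul_comm] at h1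
    omega
  have hL2 : 2 ≤ N / l ^ 9 := by
    rw [Nat.le_div_iff_mul_le (by positivity)]
    calc 2 * l ^ 9 ≤ l * l ^ 9 := Nat.mul_le_mul_right _ (by omega)
      _ = l ^ 10 := by ring
      _ ≤ N := hpow 10 (by norm_num)
  refine corank_le P Ker U hU κ σ h1 h2 blk' (x ^ 2) (2 * Real.exp (-x)) (3 * R) ?_ (by linarith) ?_
  · intro E hE
    refine (sum_bad hN0 hp64 κ hκ.le σ blk blk' (x ^ 2) (l ^ 2) (l ^ 5) (2 * l ^ 7) (l ^ 9) hr hq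
      (fun i => (hblk i).2) (fun i => (hblk' i).1) hs E
      (fun v hv => hadm v (hE v hv).1 (hE v hv).2.1) (fun v hv => (hE v hv).2.2)).trans ?_
    have b1 := num_bad_one hδ0 hδ1 (ze_pos κ).le hz hl hp hNl hN hLdiv
    have b2 := num_bad_two hl1 hp hNl (Nat.div_le_self N (l ^ 9))
    linarith
  · intro F hF
    have b := SS_nice_le (s := x ^ 2) κ hκ.le σ blk' hL2 F hF (by nlinarith) hs0 (2 * l ^ 9)
      (fun i => (hblk' i).2)
      (fun i => card_pos.1 (lt_of_lt_of_le (by positivity) (hblk' i).1))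
      (1 / (1000 * x ^ 18)) (by positivity) ?_ ?_ hs2 hN0 R hR
    · have b1 := num_nice hδ0 hδκ hl hδ1 hp hNl hN hL'div
      linarith
    · push_cast
      rw [← hx]
      have : (2 * x ^ 9) ^ 2 * (4 * (1 / (1000 * x ^ 18))) = 16 / 1000 := by
        field_simp
        ring
      rw [this]
      norm_num
    · have : 1 / (1000 * x ^ 18) ≤ 1 := by
        rw [div_le_one (by positivity)]
        have := one_le_pow₀ (n := 18) (show 1 ≤ x by linarith)
        linarith
      exact mul_le_one₀ hκ1 (by positivity) this

end Core

end Corank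

namespace Corank

open Finset

/-! ### The two matrix models -/

section Models

variable {p : ℕ} [Fact p.Prime] {N : ℕ}

/-- The corank bound for a random matrix built from independent entries; `σ = 0` for symmetric
matrices, `σ = 1` for Laplacians. -/
lemma corank_model {X : Type*} [MeasurableSpace X] [Countable X] [MeasurableSingletonClass X]
    (ν : Measure X) [IsProbabilityMeasure ν] (val : X → ZMod p) (κ : ℝ) (hκ : 0 < κ)
    (hκ1 : κ ≤ 1) (d0 : ZMod p) (hd0 : d0 ≠ 0)
    (hchar : ∀ t : ZMod p, ‖∫ x, ee (val x * t) ∂ν‖ ≤ Real.exp (-κ * eta (d0 * t)))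
    (σ : ZMod p) (Ker : (Fin N × Fin N → X) → Submodule (ZMod p) (Fin N → ZMod p))
    (U : Finset (Fin N → ZMod p)) (hU : ∀ ω, ∀ v ∈ Ker ω, v ∈ U)
    (hKer : ∀ x, ∀ v ∈ Ker x, ∀ i, ∑ j, (if i ≤ j then val (x (i, j)) else val (x (j, i)))
        * (v j - σ * v i) = 0)
    (hadm : ∀ v ∈ U, v ≠ 0 → ∃ a b, ∀ j, v a - σ * v j ≠ 0 ∨ v b - σ * v j ≠ 0)
    (R : ℝ) (hR1 : 1 ≤ R)
    (hR : (#{x : Matrix (Fin 2) (Fin 2) (ZMod p) × (Fin 2 → ZMod p) |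
      x.1 + x.1.transpose = 0 ∧ (σ = 0 → x.2 = 0)} : ℝ) ≤ R)
    (hp64 : 64 ≤ p) (l : ℕ) (hl : 1000000 ≤ (1 - Real.exp (-κ)) / 2 * l)
    (hp : (p : ℝ) ≤ Real.exp l) (hNl : (N : ℝ) ≤ Real.exp l) (hN : l ^ 100 ≤ N) :
    (Measure.pi fun _ : Fin N × Fin N => ν).real
        {ω | 2 ≤ Module.finrank (ZMod p) (Ker ω)} ≤
      2 * Real.exp (-l) + (#U : ℝ) ^ 2 * (3 * R / (p : ℝ) ^ (2 * N)) * 4 / (p : ℝ) ^ 4 := by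
  refine corank_core _ Ker U hU κ hκ hκ1 σ hadm ?_ ?_ R hR1 hR hp64 l hl hp hNl hN
  · intro v
    have h := prob_le ν val κ d0 hd0 hκ.le hchar σ (sc v)
    rw [one_mul] at h
    refine le_trans (measureReal_mono fun x hx => ?_) h
    exact fun i _ => hKer x v hx i
  · intro F
    have h := prob_le ν val κ d0 hd0 hκ.le hchar σ F
    refine le_trans (measureReal_mono fun x hx => ?_) h
    exact fun i k => hKer x _ (hx k) i

lemma two_le_finrank_ker {n : ℕ} (hn : 2 ≤ n) (A : Matrix (Fin n) (Fin n) (ZMod p))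
    (h : A.rank ≤ n - 2) : 2 ≤ Module.finrank (ZMod p) (LinearMap.ker A.mulVecLin) := by
  have h1 := LinearMap.finrank_range_add_finrank_ker A.mulVecLin
  rw [Module.finrank_fin_fun] at h1
  unfold Matrix.rank at h
  omega

lemma sym_bound (μ : Measure ℤ) (hμ : IsProbabilityMeasure μ) {a b : ℤ} (hab : a ≠ b) {lam : ℝ}
    (hlam : 0 < lam) (ha : lam ≤ μ.real {a}) (hb : lam ≤ μ.real {b})
    (hd : ((b - a : ℤ) : ZMod p) ≠ 0) (hp64 : 64 ≤ p) {n : ℕ} (hn : 2 ≤ n) (l : ℕ)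
    (hl : 1000000 ≤ (1 - Real.exp (-lam)) / 2 * l)
    (hp : (p : ℝ) ≤ Real.exp l) (hNl : (n : ℝ) ≤ Real.exp l) (hN : l ^ 100 ≤ n) :
    (matMeasure μ hμ n).real
      {x | ((symMatrix n x).map (fun z : ℤ => (z : ZMod p))).rank ≤ n - 2}
      ≤ 2 * Real.exp (-l) + 12 * (p : ℝ)⁻¹ ^ 3 := by
  have hlam1 : lam ≤ 1 := ha.trans measureReal_le_one
  have hp0 : (0 : ℝ) < p := by exact_mod_cast (Fact.out : p.Prime).pos
  have h := corank_model (N := n) μ (fun z : ℤ => (z : ZMod p)) lam hlam hlam1 _ hd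
    (char_sym μ hab hlam.le ha hb) 0
    (fun x => LinearMap.ker ((symMatrix n x).map (fun z : ℤ => (z : ZMod p))).mulVecLin)
    univ (fun _ _ _ => mem_univ _) ?_ ?_ p
    (by exact_mod_cast (Fact.out : p.Prime).one_le)
    (by exact_mod_cast card_skew_zero (by omega)) hp64 l hl hp hNl hN
  · unfold matMeasure
    refine le_trans (measureReal_mono fun x hx => ?_) (h.trans (le_of_eq ?_))
    · exact two_le_finrank_ker hn _ hx
    · rw [card_univ, Fintype.card_fun, ZMod.card, Fintype.card_fin]
      push_cast
      field_simp
      ring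
  · intro x v hv i
    have h1 : ((symMatrix n x).map (fun z : ℤ => (z : ZMod p))).mulVec v i = 0 :=
      congrFun (LinearMap.mem_ker.1 hv) i
    refine Eq.trans ?_ h1
    simp only [Matrix.mulVec, dotProduct, symMatrix, Matrix.map_apply, Matrix.of_apply]
    refine sum_congr rfl fun j _ => ?_
    split_ifs <;> simp
  · intro v _ hv
    obtain ⟨a, ha⟩ := Function.ne_iff.1 hv
    exact ⟨a, a, fun j => Or.inl (by simpa using ha)⟩

/-- Extension of a vector by `0` at the last coordinate. -/
def extZ (n : ℕ) : (Fin n → ZMod p) →ₗ[ZMod p] (Fin (n + 1) → ZMod p) where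
  toFun w i := if h : (i : ℕ) < n then w ⟨i, h⟩ else 0
  map_add' w w' := by ext i; by_cases h : (i : ℕ) < n <;> simp [h]
  map_smul' c w := by ext i; by_cases h : (i : ℕ) < n <;> simp [h]

lemma extZ_castSucc {n : ℕ} (w : Fin n → ZMod p) (i : Fin n) : extZ n w i.castSucc = w i := by
  simp [extZ]

lemma extZ_last {n : ℕ} (w : Fin n → ZMod p) : extZ n w (Fin.last n) = 0 := by
  simp [extZ]

lemma extZ_injective (n : ℕ) : Function.Injective (extZ (p := p) n) := by
  intro w w' h
  ext i
  rw [← extZ_castSucc w, h, extZ_castSucc]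

lemma edgeInd_symm {n : ℕ} (x : Fin n × Fin n → Bool) (i j : Fin n) :
    edgeInd x i j = edgeInd x j i := by
  unfold edgeInd
  rcases lt_trichotomy i j with h | h | h
  · simp [h, h.not_gt]
  · simp [h]
  · simp [h, h.not_gt]

lemma edgeInd_self {n : ℕ} (x : Fin n × Fin n → Bool) (i : Fin n) : edgeInd x i i = 0 := by
  simp [edgeInd]

/-- A kernel vector of the reduced Laplacian, extended by zero, is killed by the full Laplacian.
The last row follows from the others, since the rows sum to zero. -/
lemma lap_rows {n : ℕ} (x : Fin (n + 1) × Fin (n + 1) → Bool) (w : Fin n → ZMod p)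
    (hw : ((redLap n x).map (fun z : ℤ => (z : ZMod p))).mulVec w = 0) (i : Fin (n + 1)) :
    ∑ j, (edgeInd x i j : ZMod p) * (extZ n w j - extZ n w i) = 0 := by
  have hc : ∀ i : Fin n, ∑ j, (edgeInd x i.castSucc j : ZMod p)
      * (extZ n w j - extZ n w i.castSucc) = 0 := by
    intro i
    have h1 := congrFun hw i
    refine Eq.trans ?_ h1
    simp only [Matrix.mulVec, dotProduct, redLap, Matrix.map_apply, Matrix.of_apply]
    have h2 : ∀ j : Fin n, ((if i = j then -(∑ k : Fin (n + 1), edgeInd x k i.castSucc)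
        else edgeInd x i.castSucc j.castSucc : ℤ) : ZMod p) * w j
        = (edgeInd x i.castSucc j.castSucc : ZMod p) * w j
          - (if i = j then (∑ k : Fin (n + 1), (edgeInd x i.castSucc k : ZMod p)) * w i
            else 0) := by
      intro j
      by_cases hij : i = j
      · subst hij
        simp [edgeInd_self, edgeInd_symm x _ i.castSucc]
      · simp [hij]
    simp only [h2, sum_sub_distrib, sum_ite_eq, mem_univ, if_true, mul_sub, ← sum_mul,
      extZ_castSucc]
    congr 1
    rw [Fin.sum_univ_castSucc]
    simp [extZ_last, extZ_castSucc]
  have htot : ∑ i, ∑ j, (edgeInd x i j : ZMod p) * (extZ n w j - extZ n w i) = 0 := by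
    simp only [mul_sub, sum_sub_distrib]
    rw [sub_eq_zero, sum_comm]
    refine sum_congr rfl fun i _ => sum_congr rfl fun j _ => ?_
    rw [edgeInd_symm]
  rw [Fin.sum_univ_castSucc] at htot
  simp only [hc, sum_const_zero, zero_add] at htot
  induction i using Fin.lastCases with
  | last => exact htot
  | cast i => exact hc i

lemma lap_bound (hp64 : 64 ≤ p) {n : ℕ} (hn : 2 ≤ n) (l : ℕ)
    (hl : 1000000 ≤ (1 - Real.exp (-(1 / 2))) / 2 * l)
    (hp : (p : ℝ) ≤ Real.exp l) (hNl : ((n + 1 : ℕ) : ℝ) ≤ Real.exp l) (hN : l ^ 100 ≤ n) :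
    (graphMeasure n).real {x | ((redLap n x).map (fun z : ℤ => (z : ZMod p))).rank ≤ n - 2}
      ≤ 2 * Real.exp (-l) + 12 * (p : ℝ)⁻¹ ^ 3 := by
  have hp0 : (0 : ℝ) < p := by exact_mod_cast (Fact.out : p.Prime).pos
  set U : Finset (Fin (n + 1) → ZMod p) := univ.filter fun v => v (Fin.last n) = 0 with hUdef
  have hUcard : (#U : ℝ) ≤ (p : ℝ) ^ n := by
    have : #U ≤ #(univ : Finset (Fin n → ZMod p)) := by
      refine card_le_card_of_injOn (fun v i => v i.castSucc) (fun _ _ => by simp) ?_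
      intro v hv v' hv' h
      simp only [hUdef, coe_filter, mem_univ, true_and, Set.mem_ofPred_eq] at hv hv'
      ext i
      induction i using Fin.lastCases with
      | last => rw [hv, hv']
      | cast i => exact congrFun h i
    rw [card_univ, Fintype.card_fun, ZMod.card, Fintype.card_fin] at this
    exact_mod_cast this
  have h := corank_model (N := n + 1) coin (fun b : Bool => if b then (1 : ZMod p) else 0) (1 / 2)
    (by norm_num) (by norm_num) 1 one_ne_zero char_coin 1
    (fun x => (LinearMap.ker ((redLap n x).map (fun z : ℤ => (z : ZMod p))).mulVecLin).map
      (extZ n)) U ?_ ?_ ?_ ((p : ℝ) ^ 3)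
    (one_le_pow₀ (by exact_mod_cast (Fact.out : p.Prime).one_le))
    (by exact_mod_cast card_skew_one (by omega)) hp64 l hl hp hNl (by omega)
  · rw [graphMeasure_eq]
    refine le_trans (measureReal_mono fun x hx => ?_) (h.trans ?_)
    · have h2 := two_le_finrank_ker hn _ hx
      simp only [Set.mem_ofPred_eq]
      rwa [← (Submodule.equivMapOfInjective (extZ n) (extZ_injective n) _).finrank_eq]
    · gcongr
      calc (#U : ℝ) ^ 2 * (3 * (p : ℝ) ^ 3 / (p : ℝ) ^ (2 * (n + 1))) * 4 / (p : ℝ) ^ 4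
          ≤ ((p : ℝ) ^ n) ^ 2 * (3 * (p : ℝ) ^ 3 / (p : ℝ) ^ (2 * (n + 1))) * 4 / (p : ℝ) ^ 4 := by
            gcongr
        _ = _ := by
            field_simp
            ring
  · rintro x _ ⟨w, -, rfl⟩
    simp [hUdef, extZ_last]
  · rintro x _ ⟨w, hw, rfl⟩ i
    refine Eq.trans ?_ (lap_rows x w (LinearMap.mem_ker.1 hw) i)
    refine sum_congr rfl fun j _ => ?_
    rcases lt_trichotomy i j with h | h | h
    · simp only [edgeInd, if_pos h, if_pos h.le, one_mul]
      split_ifs <;> simp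
    · simp [h]
    · simp only [edgeInd, if_neg h.not_gt, if_neg h.not_ge, if_pos h, one_mul]
      split_ifs <;> simp
  · intro v hv hv0
    obtain ⟨a, ha⟩ := Function.ne_iff.1 hv0
    refine ⟨a, Fin.last n, fun j => ?_⟩
    have hl : v (Fin.last n) = 0 := by simpa [hUdef] using hv
    by_cases hj : v j = 0
    · exact Or.inl (by simpa [hj] using ha)
    · exact Or.inr (by simpa [hl] using hj)

end Models

end Corank

namespace Corank

/-! ### Asymptotics -/

section Final

/-- With `l = ⌈n ^ (1 / 200)⌉`, all size conditions hold for large `n`. -/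
lemma exists_threshold (D : ℝ) : ∃ n0 : ℕ, ∀ n : ℕ, n0 ≤ n → 2 ≤ n ∧
    D ≤ (⌈(n : ℝ) ^ (1 / 200 : ℝ)⌉₊ : ℝ) ∧
    ((n + 1 : ℕ) : ℝ) ≤ Real.exp (⌈(n : ℝ) ^ (1 / 200 : ℝ)⌉₊ : ℝ) ∧
    ⌈(n : ℝ) ^ (1 / 200 : ℝ)⌉₊ ^ 100 ≤ n := by
  have h1 : ∀ᶠ y : ℝ in atTop, D ≤ y ∧ 2 ≤ y ∧ 2 * y ^ 200 ≤ Real.exp y := by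
    have h2 := (Real.isLittleO_pow_exp_atTop (n := 200)).bound (show (0 : ℝ) < 1 / 2 by norm_num)
    filter_upwards [eventually_ge_atTop D, eventually_ge_atTop 2, h2] with y hD hy h
    refine ⟨hD, hy, ?_⟩
    rw [Real.norm_of_nonneg (by positivity), Real.norm_of_nonneg (by positivity)] at h
    linarith
  have h3 : Tendsto (fun n : ℕ => (n : ℝ) ^ (1 / 200 : ℝ)) atTop atTop :=
    (tendsto_rpow_atTop (by norm_num)).comp tendsto_natCast_atTop_atTop
  obtain ⟨n0, hn0⟩ := eventually_atTop.1 ((h3.eventually h1).and (eventually_ge_atTop 2))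
  refine ⟨n0, fun n hn => ?_⟩
  obtain ⟨⟨hD, hy, hexp⟩, hn2⟩ := hn0 n hn
  set y : ℝ := (n : ℝ) ^ (1 / 200 : ℝ) with hydef
  have hyn : y ^ 200 = n := by
    rw [hydef, ← Real.rpow_natCast, ← Real.rpow_mul (by positivity)]
    norm_num
  have hle := Nat.le_ceil y
  refine ⟨hn2, hD.trans hle, ?_, ?_⟩
  · refine le_trans ?_ (hexp.trans (Real.exp_le_exp.2 hle))
    rw [hyn]
    have : (1 : ℝ) ≤ n := by exact_mod_cast (by omega : 1 ≤ n)
    push_cast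
    linarith
  · have hlt := (Nat.ceil_lt_add_one (show 0 ≤ y by linarith)).le
    have hll : (⌈y⌉₊ : ℝ) ≤ y * y := by nlinarith
    have : ((⌈y⌉₊ : ℝ)) ^ 100 ≤ n := by
      calc ((⌈y⌉₊ : ℝ)) ^ 100 ≤ (y * y) ^ 100 := by gcongr
        _ = y ^ 200 := by ring
        _ = n := hyn
    exact_mod_cast this

end Final

end Corank

theorem moderate_primes_corank_sym_lap (α : ℝ) (hα : 0 < α)
    (μ : Measure ℤ) (hμ : IsProbabilityMeasure μ) (hbal : IsBalanced α μ) :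
    ∃ c : ℝ, 0 < c ∧ ∃ K : ℝ, 0 < K ∧
      ∀ (n p : ℕ), p.Prime → (p : ℝ) ≤ Real.exp ((n : ℝ) ^ c) →
        ((matMeasure μ hμ n)
            {x | ((symMatrix n x).map (fun z : ℤ => (z : ZMod p))).rank ≤ n - 2}).toReal
          ≤ K * ((p : ℝ)⁻¹ ^ 3 + Real.exp (-(n : ℝ) ^ c)) ∧
        ((graphMeasure n)
            {x | ((redLap n x).map (fun z : ℤ => (z : ZMod p))).rank ≤ n - 2}).toReal
          ≤ K * ((p : ℝ)⁻¹ ^ 3 + Real.exp (-(n : ℝ) ^ c)) := by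
  obtain ⟨a, b, hab, ha, hb⟩ := Corank.exists_atoms hα μ hbal
  set lam : ℝ := min (μ.real {a}) (μ.real {b}) with hlam
  have hlam0 : 0 < lam := lt_min ha hb
  set δ1 : ℝ := (1 - Real.exp (-lam)) / 2 with hδ1
  set δ2 : ℝ := (1 - Real.exp (-(1 / 2))) / 2 with hδ2
  have hδ1' : 0 < δ1 := by
    have : Real.exp (-lam) < 1 := by rw [Real.exp_lt_one_iff]; linarith
    rw [hδ1]; linarith
  have hδ2' : 0 < δ2 := by
    have : Real.exp (-(1 / 2)) < 1 := by rw [Real.exp_lt_one_iff]; norm_num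
    rw [hδ2]; linarith
  obtain ⟨n0, hn0⟩ := Corank.exists_threshold (1000000 / min δ1 δ2)
  -- primes below `p0` and sizes below `n0` are absorbed into the constant `K`
  set p0 : ℕ := max 64 ((b - a).natAbs + 1) with hp0
  refine ⟨1 / 200, by norm_num, 12 + (p0 : ℝ) ^ 3 + Real.exp ((n0 : ℝ) ^ (1 / 200 : ℝ)),
    by positivity, fun n p hp hpn => ?_⟩
  have : Fact p.Prime := ⟨hp⟩
  have : IsProbabilityMeasure (matMeasure μ hμ n) := by unfold matMeasure; infer_instance
  have : IsProbabilityMeasure (graphMeasure n) := by unfold graphMeasure; infer_instance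
  have hpr : (0 : ℝ) < p := by exact_mod_cast hp.pos
  set K : ℝ := 12 + (p0 : ℝ) ^ 3 + Real.exp ((n0 : ℝ) ^ (1 / 200 : ℝ)) with hK
  have hexp0 := Real.exp_pos ((n0 : ℝ) ^ (1 / 200 : ℝ))
  have hexp1 := Real.exp_pos (-(n : ℝ) ^ (1 / 200 : ℝ))
  have hpinv : 0 < (p : ℝ)⁻¹ ^ 3 := by positivity
  by_cases hcase : n < n0 ∨ p < p0
  · have h1 : 1 ≤ K * ((p : ℝ)⁻¹ ^ 3 + Real.exp (-(n : ℝ) ^ (1 / 200 : ℝ))) := by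
      rcases hcase with h | h
      · have h2 : (n : ℝ) ^ (1 / 200 : ℝ) ≤ (n0 : ℝ) ^ (1 / 200 : ℝ) := by
          gcongr
        calc (1 : ℝ) ≤ Real.exp ((n0 : ℝ) ^ (1 / 200 : ℝ))
              * Real.exp (-(n : ℝ) ^ (1 / 200 : ℝ)) := by
              rw [← Real.exp_add]
              exact Real.one_le_exp (by linarith)
          _ ≤ _ := by
              gcongr
              · rw [hK]
                have : (0 : ℝ) ≤ (p0 : ℝ) ^ 3 := by positivity
                linarith
              · linarith
      · calc (1 : ℝ) = (p : ℝ) ^ 3 * (p : ℝ)⁻¹ ^ 3 := by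
              rw [← mul_pow, mul_inv_cancel₀ hpr.ne', one_pow]
          _ ≤ _ := by
              gcongr
              · have : (p : ℝ) ^ 3 ≤ (p0 : ℝ) ^ 3 := by gcongr
                rw [hK]
                linarith
              · linarith
    exact ⟨le_trans measureReal_le_one h1, le_trans measureReal_le_one h1⟩
  · push Not at hcase
    obtain ⟨hn, hpp⟩ := hcase
    obtain ⟨hn2, hD, hnl, hl100⟩ := hn0 n hn
    set l : ℕ := ⌈(n : ℝ) ^ (1 / 200 : ℝ)⌉₊ with hl
    have hnl0 : (n : ℝ) ^ (1 / 200 : ℝ) ≤ l := Nat.le_ceil _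
    have hp64 : 64 ≤ p := le_trans (le_max_left _ _) hpp
    have hpl : (p : ℝ) ≤ Real.exp l := hpn.trans (Real.exp_le_exp.2 hnl0)
    have hmin : 1000000 ≤ min δ1 δ2 * l := by
      rwa [div_le_iff₀' (lt_min hδ1' hδ2')] at hD
    have hl1 : 1000000 ≤ δ1 * l :=
      hmin.trans (mul_le_mul_of_nonneg_right (min_le_left _ _) (by positivity))
    have hl2 : 1000000 ≤ δ2 * l :=
      hmin.trans (mul_le_mul_of_nonneg_right (min_le_right _ _) (by positivity))
    have hd : ((b - a : ℤ) : ZMod p) ≠ 0 := by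
      intro h
      rw [ZMod.intCast_zmod_eq_zero_iff_dvd, Int.natCast_dvd] at h
      have h2 := Nat.le_of_dvd (Int.natAbs_pos.2 (sub_ne_zero.2 hab.symm)) h
      have h3 : (b - a).natAbs + 1 ≤ p := le_trans (le_max_right _ _) hpp
      omega
    have hfin : 2 * Real.exp (-l) + 12 * (p : ℝ)⁻¹ ^ 3
        ≤ K * ((p : ℝ)⁻¹ ^ 3 + Real.exp (-(n : ℝ) ^ (1 / 200 : ℝ))) := by
      have h1 : Real.exp (-l) ≤ Real.exp (-(n : ℝ) ^ (1 / 200 : ℝ)) :=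
        Real.exp_le_exp.2 (by linarith)
      have h2 : 12 ≤ K := by
        rw [hK]
        have : (0 : ℝ) ≤ (p0 : ℝ) ^ 3 := by positivity
        linarith
      calc 2 * Real.exp (-l) + 12 * (p : ℝ)⁻¹ ^ 3
          ≤ 12 * ((p : ℝ)⁻¹ ^ 3 + Real.exp (-(n : ℝ) ^ (1 / 200 : ℝ))) := by linarith
        _ ≤ _ := by gcongr
    have hnl' : (n : ℝ) ≤ Real.exp l := le_trans (by push_cast; linarith) hnl
    exact ⟨(Corank.sym_bound μ hμ hab hlam0 (min_le_left _ _) (min_le_right _ _) hd hp64 hn2 l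
      hl1 hpl hnl' hl100).trans hfin,
      (Corank.lap_bound hp64 hn2 l hl2 hpl hnl hl100).trans hfin⟩
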